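/- Let Δ ⊂ ℝ³ be a tetrahedron with |Δ| = 1. There is a constant C depending only on Δ such that for every ρ ∈ [0,1] and every ℓ > 0, e(ρ) − μ* ρ ≥ F_{ℓΔ}(ρ)/ℓ³ − C ρ/ℓ. -/

import Mathlib

open MeasureTheory Metric Set Filter Bornology
open scoped Topology ENNReal NNReal Pointwise

noncomputable section

/-- Three-dimensional Euclidean space. -/
abbrev E3 : Type := EuclideanSpace ℝ (Fin 3)

/-- The divergence of a vector field on `E3`, defined as the trace of its derivative. -/
def divg (φ : E3 → E3) (x : E3) : ℝ :=
  LinearMap.trace ℝ E3 (fderiv ℝ φ x : E3 →ₗ[ℝ] E3)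

/-- The candidate values `∫_Ω div φ` over `C¹` compactly supported vector fields bounded by one. -/
def perCand (Ω : Set E3) : Set ℝ :=
  {a : ℝ | ∃ φ : E3 → E3, ContDiff ℝ 1 φ ∧ HasCompactSupport φ ∧
      (∀ x, ‖φ x‖ ≤ 1) ∧ a = ∫ x in Ω, divg φ x}

/-- The perimeter of a set, in the sense of geometric measure theory. -/
def per (Ω : Set E3) : ℝ := sSup (perCand Ω)

/-- A set has finite perimeter if the family of integrals defining the perimeter is
bounded above. -/
def HasFinPer (Ω : Set E3) : Prop := BddAbove (perCand Ω)

/-- The Lebesgue volume of a set as a real number. -/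
def vol (Ω : Set E3) : ℝ := (volume Ω).toReal

/-- The liquid drop energy `𝓔_Λ[ρ,Ω]`. -/
def ldEnergy (Λ : Set E3) (ρ : ℝ) (Ω : Set E3) : ℝ :=
  per Ω + (1/2) * ∫ x, ∫ y,
    (Set.indicator Ω (fun _ => (1:ℝ)) x - ρ * Set.indicator Λ (fun _ => (1:ℝ)) x) *
      (Set.indicator Ω (fun _ => (1:ℝ)) y - ρ * Set.indicator Λ (fun _ => (1:ℝ)) y) / ‖x - y‖

/-- The neutral ground state energy `E_Λ(ρ)`. -/
def EE (Λ : Set E3) (ρ : ℝ) : ℝ :=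
  sInf {t : ℝ | ∃ Ω : Set E3, MeasurableSet Ω ∧ Ω ⊆ Λ ∧ HasFinPer Ω ∧
    vol Ω = ρ * vol Λ ∧ t = ldEnergy Λ ρ Ω}

/-- The liquid drop energy `I[Ω]` of an isolated droplet (no background). -/
def II (Ω : Set E3) : ℝ :=
  per Ω + (1/2) * ∫ x in Ω, ∫ y in Ω, 1 / ‖x - y‖

/-- `μ* = inf I[Ω]/|Ω|`. -/
def muStar : ℝ :=
  sInf {t : ℝ | ∃ Ω : Set E3, MeasurableSet Ω ∧ HasFinPer Ω ∧
    0 < volume Ω ∧ volume Ω < ⊤ ∧ t = II Ω / vol Ω}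

/-- A minimizer for the isolated liquid drop problem. -/
def IsMinimizer (Ω : Set E3) : Prop :=
  MeasurableSet Ω ∧ HasFinPer Ω ∧ 0 < volume Ω ∧ volume Ω < ⊤ ∧ II Ω = muStar * vol Ω

/-- The set of masses of minimizers. -/
def minimizerMasses : Set ℝ := {m : ℝ | ∃ Ω : Set E3, IsMinimizer Ω ∧ m = vol Ω}

/-- The largest mass of a minimizer. -/
def mStar : ℝ := sSup minimizerMasses

/-- The smallest mass of a minimizer. -/
def mStarStar : ℝ := sInf minimizerMasses

/-- `Λ` is an `(r,L)`-Lipschitz open set: near each boundary point it is, in a suitable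
orthonormal coordinate system, the epigraph of an `L`-Lipschitz function. -/
def IsLipschitzDomain (r L : ℝ) (Λ : Set E3) : Prop :=
  ∀ x ∈ frontier Λ, ∃ (g : E3 ≃ᵢ E3) (f : ℝ × ℝ → ℝ),
    LipschitzWith L.toNNReal f ∧
    Λ ∩ ball x r = {y ∈ ball x r | f (g y 0, g y 1) < g y 2}

/-- Fisher regularity of the boundary. -/
def FisherCond (C ℓ : ℝ) (Λ : Set E3) : Prop :=
  ∀ h : ℝ, 0 < h → h ≤ ℓ → (volume (frontier Λ + ball (0:E3) h)).toReal ≤ C * ℓ^2 * h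

/-- An admissible sequence of domains for the thermodynamic limit. -/
def IsAdmissibleSeq (r L C : ℝ) (Λs : ℕ → Set E3) (ℓ : ℕ → ℝ) : Prop :=
  Tendsto ℓ atTop atTop ∧
  ∀ n : ℕ, IsOpen (Λs n) ∧ IsBounded (Λs n) ∧ IsLipschitzDomain r L (Λs n) ∧
    ball 0 (ℓ n / C) ⊆ Λs n ∧ Λs n ⊆ ball 0 (ℓ n) ∧ FisherCond C (ℓ n) (Λs n)

/-- `e` is the thermodynamic limit function of the liquid drop model. -/
def IsThermoLimit (e : ℝ → ℝ) : Prop :=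
  ∀ ρ : ℝ, 0 ≤ ρ → ρ ≤ 1 →
    ∀ (r L C : ℝ) (Λs : ℕ → Set E3) (ℓ : ℕ → ℝ), 0 < r → 0 < L → 0 < C →
      IsAdmissibleSeq r L C Λs ℓ →
      Tendsto (fun n => EE (Λs n) ρ / vol (Λs n)) atTop (𝓝 (e ρ))

/-- The domain for the `N`-particle Jellium problem: `N^{1/3} Λ₁` with `Λ₁` the ball of
unit volume centered at the origin. -/
def jelDomain (N : ℕ) : Set E3 :=
  ball (0:E3) ((N : ℝ) ^ ((1:ℝ)/3) * (3 / (4 * Real.pi)) ^ ((1:ℝ)/3))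

/-- The `N`-particle Jellium ground state energy. -/
def jelN (N : ℕ) : ℝ :=
  sInf {t : ℝ | ∃ x : Fin N → E3, (∀ j, x j ∈ jelDomain N) ∧
    t = (∑ j : Fin N, ∑ k : Fin N, if j < k then 1 / ‖x j - x k‖ else 0)
      - (∑ j : Fin N, ∫ y in jelDomain N, 1 / ‖x j - y‖)
      + (1/2) * ∫ x' in jelDomain N, ∫ y in jelDomain N, 1 / ‖x' - y‖}

/-- `eJ` is the Jellium energy per particle in the thermodynamic limit. -/
def IsJelliumLimit (eJ : ℝ) : Prop :=
  Tendsto (fun N : ℕ => jelN N / (N : ℝ)) atTop (𝓝 eJ)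

/-- The grand-canonical liquid drop energy `F_Λ(ρ)`. -/
def FF (Λ : Set E3) (ρ : ℝ) : ℝ :=
  sInf {t : ℝ | ∃ Ω : Set E3, MeasurableSet Ω ∧ Ω ⊆ Λ ∧ HasFinPer Ω ∧
    t = ldEnergy Λ ρ Ω - muStar * vol Ω}

/-- A tetrahedron: the interior of the convex hull of four affinely independent points. -/
def IsTetra (Δ : Set E3) : Prop :=
  ∃ v : Fin 4 → E3, AffineIndependent ℝ v ∧ Δ = interior (convexHull ℝ (Set.range v))

/-- The open cube `(-L/2, L/2)³`. -/
def cubeL (Lside : ℝ) : Set E3 := {x : E3 | ∀ i, |x i| < Lside / 2}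

/-- The grand-canonical Jellium energy of point particles of charge `m` in the domain `S`
with a uniform background of density one. -/
def pointJellium (m : ℝ) (S : Set E3) : ℝ :=
  sInf {t : ℝ | ∃ (n : ℕ) (x : Fin n → E3), (∀ j, x j ∈ S) ∧
    t = (∑ j : Fin n, ∑ k : Fin n, if j < k then m^2 / ‖x j - x k‖ else 0)
      - m * (∑ j : Fin n, ∫ y in S, 1 / ‖x j - y‖)
      + (1/2) * ∫ x' in S, ∫ y in S, 1 / ‖x' - y‖}

/-- The conclusions of the decomposition theorem for minimizing sequences. -/
def IsDecomp (Ω : ℕ → Set E3) (m : ℝ) (K : ℕ) (Ωs : Fin K → Set E3)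
    (a : ℕ → Fin K → E3) (R : ℝ) (φ : ℕ → ℕ) : Prop :=
  StrictMono φ ∧ 0 < R ∧
  (∀ j k : Fin K, j ≠ k → Tendsto (fun n => ‖a n j - a n k‖) atTop atTop) ∧
  (∀ j, IsMinimizer (Ωs j)) ∧
  (∀ j, mStarStar ≤ vol (Ωs j) ∧ vol (Ωs j) ≤ mStar) ∧
  (∀ j, Tendsto
    (fun n => volume (symmDiff ({x : E3 | x + a n j ∈ Ω (φ n)} ∩ ball (0:E3) R) (Ωs j)))
    atTop (𝓝 0)) ∧
  Tendsto (fun n => volume (Ω (φ n) \ ⋃ j, ball (a n j) R)) atTop (𝓝 0) ∧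
  Tendsto (fun n => per (Ω (φ n) \ ⋃ j, ball (a n j) R)) atTop (𝓝 0) ∧
  m = ∑ j, vol (Ωs j) ∧
  (2 ≤ K → ∃ ε : ℕ → ℝ, Tendsto ε atTop (𝓝 0) ∧ ∀ n : ℕ,
    muStar * vol (Ω (φ n)) +
      (∑ j : Fin K, ∑ k : Fin K,
        if j < k then (vol (Ωs j) * vol (Ωs k) + ε n) / ‖a n j - a n k‖ else 0)
      ≤ II (Ω (φ n)))

instance : MeasurableSpace (Matrix (Fin 3) (Fin 3) ℝ) :=
  (inferInstance : MeasurableSpace (Fin 3 → Fin 3 → ℝ))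

/-- The rotation group SO(3), as a set of matrices. -/
def SO3 : Set (Matrix (Fin 3) (Fin 3) ℝ) := {R | R * R.transpose = 1 ∧ R.det = 1}

/-- The action of a matrix on Euclidean space. -/
def rot (R : Matrix (Fin 3) (Fin 3) ℝ) (x : E3) : E3 :=
  (EuclideanSpace.equiv (Fin 3) ℝ).symm (R.mulVec (EuclideanSpace.equiv (Fin 3) ℝ x))

/-- The image of a set under the rigid motion `x ↦ Rx + τ`. -/
def rigidImage (R : Matrix (Fin 3) (Fin 3) ℝ) (τ : E3) (S : Set E3) : Set E3 :=
  (fun x => rot R x + τ) '' S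

/-- `μ` is the normalized Haar measure of SO(3): a probability measure concentrated on SO(3)
which is invariant under left multiplication by rotations. -/
def IsHaarSO3 (μ : Measure (Matrix (Fin 3) (Fin 3) ℝ)) : Prop :=
  IsProbabilityMeasure μ ∧ μ SO3ᶜ = 0 ∧ ∀ S ∈ SO3, Measure.map (fun R => S * R) μ = μ

/-- The cube of the tiling of side length `ε` indexed by `z ∈ ℤ³`. -/
def cubeZ (ε : ℝ) (z : Fin 3 → ℤ) : Set E3 := {x : E3 | ∀ i, |x i - ε * (z i : ℝ)| < ε / 2}

/-- The distance between two sets. -/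
def setDist (s t : Set E3) : ℝ := sInf {d : ℝ | ∃ p ∈ s, ∃ q ∈ t, d = dist p q}

/-- The outer cubic boundary layer of `Λ` at scale `ε`. -/
def outerLayer (Λ : Set E3) (ε : ℝ) : Set E3 :=
  ⋃ z ∈ {z : Fin 3 → ℤ | setDist (cubeZ ε z) (frontier Λ) ≤ ε}, closure (cubeZ ε z \ Λ)

/-!
Write `K = ℓΔ`. Averaging over the translates of `K` multiplies the Coulomb kernel by the
covariogram of the simplex, `|K ∩ (K + z)| = |K| (1 - p z)₊ ^ 3` for a gauge `p`. Averaging over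
rotations as well turns `(1 - p z)₊ ^ 3 / |z|` into a radial kernel that `1 / |z|` exceeds by
a positive definite one (Graf and Schenker), so that for a suitable rotation of a droplet
configuration in a ball, localization does not increase the Coulomb energy. Localizing a test
field with smooth cutoffs of `K` costs only the gradient of the cutoff, hence the perimeter
increases by at most `C ℓ² |Ω|`. Each of the resulting pieces has grand-canonical energy at least
`F_K(ρ)`, apart from those near the boundary of the ball, which are negligible as its radius tends
to infinity.
-/

local notation:max "𝟙[" K "]" => Set.indicator K (fun _ => (1 : ℝ))

section CutoffStructure

variable {E : Type*} [NormedAddCommGroup E] [NormedSpace ℝ E] {K : Set E} {v : E → ℝ}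

/-- A `C¹` cutoff function of `K`: it lies between `0` and the indicator function of `K`. -/
structure IsCutoff (K : Set E) (v : E → ℝ) : Prop where
  contDiff : ContDiff ℝ 1 v
  hasCompactSupport : HasCompactSupport v
  nonneg : ∀ x, 0 ≤ v x
  le_indicator : ∀ x, v x ≤ 𝟙[K] x

namespace IsCutoff

lemma le_one (h : IsCutoff K v) (x : E) : v x ≤ 1 :=
  (h.le_indicator x).trans (indicator_le_self' (fun _ _ => zero_le_one) x)

lemma abs_le_one (h : IsCutoff K v) (x : E) : |v x| ≤ 1 := by
  rw [abs_of_nonneg (h.nonneg x)]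
  exact h.le_one x

lemma eq_zero (h : IsCutoff K v) {x : E} (hx : x ∉ K) : v x = 0 :=
  le_antisymm ((h.le_indicator x).trans_eq (indicator_of_notMem hx _)) (h.nonneg x)

lemma continuous_fderiv (h : IsCutoff K v) : Continuous (fderiv ℝ v) :=
  h.contDiff.continuous_fderiv one_ne_zero

end IsCutoff

lemma mem_vadd_smul_set_iff {r : ℝ} (hr : r ≠ 0) (a x : E) :
    x ∈ a +ᵥ r • K ↔ r⁻¹ • (x - a) ∈ K := by
  rw [mem_vadd_set_iff_neg_vadd_mem, mem_smul_set_iff_inv_smul_mem₀ hr, vadd_eq_add,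
    neg_add_eq_sub]

end CutoffStructure

section Cutoffs

variable {E : Type*} [NormedAddCommGroup E] [InnerProductSpace ℝ E] [FiniteDimensional ℝ E]
  [MeasurableSpace E] [BorelSpace E]

/-- The convolution `𝟙_A * v`, the smoothed indicator function of `A`. -/
def mollifiedIndicator (A : Set E) (v : E → ℝ) (x : E) : ℝ := ∫ τ in A, v (x - τ)

lemma mollifiedIndicator_eq_convolution {A : Set E} (hA : MeasurableSet A) (v : E → ℝ) :
    mollifiedIndicator A v = convolution 𝟙[A] v (ContinuousLinearMap.mul ℝ ℝ) volume := by
  funext x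
  rw [mollifiedIndicator, convolution, ← integral_indicator hA]
  congr 1 with τ
  by_cases hτ : τ ∈ A <;> simp [hτ]

lemma locallyIntegrable_indicator_one {A : Set E} (hA : MeasurableSet A) :
    LocallyIntegrable 𝟙[A] (volume : Measure E) :=
  (locallyIntegrable_const 1).indicator hA

lemma contDiff_mollifiedIndicator {A : Set E} (hA : MeasurableSet A) {v : E → ℝ}
    (hv : ContDiff ℝ 1 v) (hvc : HasCompactSupport v) : ContDiff ℝ 1 (mollifiedIndicator A v) := by
  rw [mollifiedIndicator_eq_convolution hA]
  exact hvc.contDiff_convolution_right (n := 1) _ (locallyIntegrable_indicator_one hA) hv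

lemma fderiv_mollifiedIndicator {A : Set E} (hA : MeasurableSet A) {v : E → ℝ}
    (hv : ContDiff ℝ 1 v) (hvc : HasCompactSupport v) (x : E) :
    fderiv ℝ (mollifiedIndicator A v) x = ∫ τ in A, fderiv ℝ v (x - τ) := by
  rw [mollifiedIndicator_eq_convolution hA, (hvc.hasFDerivAt_convolution_right
    (ContinuousLinearMap.mul ℝ ℝ) (locallyIntegrable_indicator_one hA) hv x).fderiv,
    convolution, ← integral_indicator hA]
  congr 1 with τ y
  by_cases hτ : τ ∈ A <;> simp [hτ, ContinuousLinearMap.precompR]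

lemma mollifiedIndicator_nonneg (A : Set E) {v : E → ℝ} (hv : ∀ x, 0 ≤ v x) (x : E) :
    0 ≤ mollifiedIndicator A v x :=
  integral_nonneg fun _ => hv _

lemma sum_setIntegral_sub_le_integral {ι : Type*} [Fintype ι] {A : ι → Set E}
    (hA : ∀ i, MeasurableSet (A i)) (hd : Pairwise (Function.onFun Disjoint A)) {g : E → ℝ}
    (hg : Integrable g) (hg0 : ∀ x, 0 ≤ g x) (x : E) :
    ∑ i, ∫ τ in A i, g (x - τ) ≤ ∫ τ, g τ := by
  have hgx : Integrable fun τ => g (x - τ) := hg.comp_sub_left x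
  calc ∑ i, ∫ τ in A i, g (x - τ) = ∫ τ in ⋃ i, A i, g (x - τ) :=
        (integral_iUnion_fintype hA hd fun i => hgx.integrableOn).symm
    _ ≤ ∫ τ, g (x - τ) := setIntegral_le_integral hgx (Eventually.of_forall fun _ => hg0 _)
    _ = ∫ τ, g τ := integral_sub_left_eq_self g _ x

lemma sum_norm_fderiv_mollifiedIndicator_le {ι : Type*} [Fintype ι] {A : ι → Set E}
    (hA : ∀ i, MeasurableSet (A i)) (hd : Pairwise (Function.onFun Disjoint A)) {v : E → ℝ}
    (hv : ContDiff ℝ 1 v) (hvc : HasCompactSupport v) (x : E) :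
    ∑ i, ‖fderiv ℝ (mollifiedIndicator (A i) v) x‖ ≤ ∫ τ, ‖fderiv ℝ v τ‖ := by
  have hint : Integrable fun τ => ‖fderiv ℝ v τ‖ :=
    ((hv.continuous_fderiv one_ne_zero).integrable_of_hasCompactSupport (hvc.fderiv ℝ)).norm
  refine le_trans (Finset.sum_le_sum fun i _ => ?_)
    (sum_setIntegral_sub_le_integral hA hd hint (fun _ => norm_nonneg _) x)
  rw [fderiv_mollifiedIndicator (hA i) hv hvc]
  exact norm_integral_le_integral_norm _

lemma norm_fderiv_mollifiedIndicator_le {A : Set E} (hA : MeasurableSet A) {v : E → ℝ}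
    (hv : ContDiff ℝ 1 v) (hvc : HasCompactSupport v) (x : E) :
    ‖fderiv ℝ (mollifiedIndicator A v) x‖ ≤ ∫ τ, ‖fderiv ℝ v τ‖ := by
  simpa using sum_norm_fderiv_mollifiedIndicator_le (ι := Unit) (A := fun _ => A)
    (fun _ => hA) Subsingleton.pairwise hv hvc x

/-- A sequence of cutoffs converging to the indicator function of `K`, with gradients bounded in
`L¹` by `C`. It is a smooth substitute for a perimeter of `K` at most `C`. -/
structure IsBVCutoffSeq (K : Set E) (C : ℝ) (v : ℕ → E → ℝ) : Prop where
  isCutoff : ∀ n, IsCutoff K (v n)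
  tendsto : ∀ x, Tendsto (fun n => v n x) atTop (𝓝 (𝟙[K] x))
  integral_norm_fderiv_le : ∀ n, ∫ x, ‖fderiv ℝ (v n) x‖ ≤ C

namespace IsCutoff

variable {K K' : Set E} {v : E → ℝ}

lemma integrable (h : IsCutoff K v) : Integrable v :=
  h.contDiff.continuous.integrable_of_hasCompactSupport h.hasCompactSupport

lemma integrable_fderiv (h : IsCutoff K v) : Integrable (fderiv ℝ v) :=
  h.continuous_fderiv.integrable_of_hasCompactSupport (h.hasCompactSupport.fderiv ℝ)

lemma integral_le_measureReal (h : IsCutoff K v) (hK : MeasurableSet K) (hKv : volume K ≠ ⊤) :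
    ∫ x, v x ≤ volume.real K := by
  refine (integral_mono h.integrable ?_ h.le_indicator).trans_eq ?_
  · exact (integrable_indicator_iff hK).2 (integrableOn_const hKv)
  · simp [integral_indicator hK]

lemma integral_norm_fderiv_le (h : IsCutoff K v) (hKv : volume K ≠ ⊤)
    (hK' : ∀ x ∈ K', v x = 1) {B : ℝ} (hB : ∀ x, ‖fderiv ℝ v x‖ ≤ B) :
    ∫ x, ‖fderiv ℝ v x‖ ≤ B * volume.real (K \ K') := by
  have hvan : ∀ x, x ∉ K \ K' → ‖fderiv ℝ v x‖ = 0 := by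
    intro x hx
    rw [Set.mem_sdiff, not_and_not_right] at hx
    rw [norm_eq_zero]
    by_cases hxK : x ∈ K
    · have hmax : IsLocalMax v x := Eventually.of_forall fun y => by
        rw [hK' x (hx hxK)]
        exact h.le_one y
      exact hmax.fderiv_eq_zero
    · have hmin : IsLocalMin v x := Eventually.of_forall fun y => by
        rw [h.eq_zero hxK]
        exact h.nonneg y
      exact hmin.fderiv_eq_zero
  rw [← setIntegral_eq_integral_of_forall_compl_eq_zero hvan]
  refine (le_abs_self _).trans (norm_setIntegral_le_of_norm_le_const
    (f := fun x => ‖fderiv ℝ v x‖) ((measure_mono sdiff_subset).trans_lt hKv.lt_top) fun x _ => ?_)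
  simpa using hB x

end IsCutoff

lemma measureReal_vadd_smul {r : ℝ} (hr : 0 ≤ r) (a : E) (K : Set E) :
    volume.real (a +ᵥ r • K) = r ^ Module.finrank ℝ E * volume.real K := by
  rw [measureReal_def, measure_vadd, Measure.addHaar_smul, ENNReal.toReal_mul,
    abs_of_nonneg (by positivity), ENNReal.toReal_ofReal (by positivity), measureReal_def]

namespace IsBVCutoffSeq

lemma vadd_smul {K : Set E} {C : ℝ} {v : ℕ → E → ℝ} (h : IsBVCutoffSeq K C v) {r : ℝ}
    (hr : 0 < r) (a : E) :
    IsBVCutoffSeq (a +ᵥ r • K) (r ^ Module.finrank ℝ E / r * C)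
      (fun n x => v n (r⁻¹ • (x - a))) := by
  have hind : ∀ x, 𝟙[K] (r⁻¹ • (x - a)) = 𝟙[a +ᵥ r • K] x := fun x =>
    indicator_eq_indicator (mem_vadd_smul_set_iff hr.ne' a x).symm rfl
  have hfderiv : ∀ n x, fderiv ℝ (fun x => v n (r⁻¹ • (x - a))) x =
      r⁻¹ • fderiv ℝ (v n) (r⁻¹ • (x - a)) := fun n x => by
    rw [fderiv_comp_sub (f := fun x => v n (r⁻¹ • x)), fderiv_comp_smul]
  refine ⟨fun n => ⟨?_, ?_, fun x => (h.isCutoff n).nonneg _, fun x => ?_⟩, fun x => ?_,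
    fun n => ?_⟩
  · exact (h.isCutoff n).contDiff.comp (by fun_prop)
  · exact ((h.isCutoff n).hasCompactSupport.comp_smul (inv_pos.2 hr).ne').comp_homeomorph
      (Homeomorph.subRight a)
  · rw [← hind]
    exact (h.isCutoff n).le_indicator _
  · rw [← hind]
    exact h.tendsto _
  · calc ∫ x, ‖fderiv ℝ (fun x => v n (r⁻¹ • (x - a))) x‖
        = r⁻¹ * ∫ x, ‖fderiv ℝ (v n) (r⁻¹ • (x - a))‖ := by
          simp only [hfderiv, norm_smul, norm_inv, Real.norm_of_nonneg hr.le, integral_const_mul]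
      _ = r⁻¹ * (r ^ Module.finrank ℝ E * ∫ x, ‖fderiv ℝ (v n) x‖) := by
          rw [integral_sub_right_eq_self (fun x => ‖fderiv ℝ (v n) (r⁻¹ • x)‖),
            Measure.integral_comp_smul volume (fun x => ‖fderiv ℝ (v n) x‖), smul_eq_mul,
            inv_pow, inv_inv, abs_of_nonneg (by positivity)]
      _ = r ^ Module.finrank ℝ E / r * ∫ x, ‖fderiv ℝ (v n) x‖ := by ring
      _ ≤ r ^ Module.finrank ℝ E / r * C := by gcongr; exact h.integral_norm_fderiv_le n

end IsBVCutoffSeq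

/-- The cutoff of a convex body `K` around the origin at scale `(n + 2)⁻¹`: the indicator function
of `((n + 1) / (n + 2)) K`, mollified by a bump `η` rescaled by `(n + 2)⁻¹`. -/
def convexCutoff (K : Set E) (η : E → ℝ) (n : ℕ) (x : E) : ℝ :=
  mollifiedIndicator (((n : ℝ) + 1) • K) η (((n : ℝ) + 2) • x)

section ConvexBody

variable {K : Set E}

lemma norm_fderiv_convexCutoff_le (hK : IsOpen K) {η : E → ℝ} (hη : ContDiff ℝ 1 η)
    (hηc : HasCompactSupport η) (n : ℕ) (x : E) :
    ‖fderiv ℝ (convexCutoff K η n) x‖ ≤ (n + 2) * ∫ x, ‖fderiv ℝ η x‖ := by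
  have hK' : MeasurableSet (((n : ℝ) + 1) • K) := (hK.smul₀ (by positivity)).measurableSet
  have hfderiv : fderiv ℝ (convexCutoff K η n) x = ((n : ℝ) + 2) •
      fderiv ℝ (mollifiedIndicator (((n : ℝ) + 1) • K) η) (((n : ℝ) + 2) • x) :=
    fderiv_comp_smul _
  rw [hfderiv, norm_smul, Real.norm_of_nonneg (by positivity)]
  gcongr
  exact norm_fderiv_mollifiedIndicator_le hK' hη hηc _

lemma convexCutoff_eq_zero (hK : Convex ℝ K) {η : E → ℝ} (hη : Function.support η ⊆ K) (n : ℕ)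
    {x : E} (hx : x ∉ K) : convexCutoff K η n x = 0 := by
  refine setIntegral_eq_zero_of_forall_eq_zero fun τ hτ => ?_
  by_contra hne
  have hmem : ((n : ℝ) + 2) • x ∈ ((n : ℝ) + 2) • K := by
    have hadd := add_mem_add hτ (hη hne)
    rw [add_sub_cancel] at hadd
    rw [show (n : ℝ) + 2 = (n + 1) + 1 by ring, hK.add_smul (by positivity) zero_le_one, one_smul]
    convert hadd using 2
    ring
  exact hx ((smul_mem_smul_set_iff₀ (by positivity) _ _).1 hmem)

lemma convexCutoff_eq_integral (hK : Convex ℝ K) {η : E → ℝ}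
    (hη : ∀ x ∈ Function.support η, -x ∈ K) (n : ℕ) {x : E}
    (hx : x ∈ ((n : ℝ) / (n + 2)) • K) : convexCutoff K η n x = ∫ τ, η τ := by
  have hx' : ((n : ℝ) + 2) • x ∈ (n : ℝ) • K := by
    have hmem := smul_mem_smul_set (a := (n : ℝ) + 2) hx
    rwa [smul_smul, mul_div_cancel₀ _ (by positivity)] at hmem
  rw [convexCutoff, mollifiedIndicator, setIntegral_eq_integral_of_forall_compl_eq_zero,
    integral_sub_left_eq_self η]
  intro τ hτ
  by_contra hne
  have hadd := add_mem_add hx' (hη _ hne)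
  rw [neg_sub, add_sub_cancel] at hadd
  rw [hK.add_smul (by positivity) zero_le_one, one_smul] at hτ
  exact hτ hadd

lemma one_sub_pow_div_le (d n : ℕ) :
    1 - ((n : ℝ) / (n + 2)) ^ d ≤ 2 * d / (n + 2) := by
  have hn : (n : ℝ) / (n + 2) = 1 + -(2 / (n + 2)) := by field_simp; ring
  have hle : (2 : ℝ) / (n + 2) ≤ 2 :=
    div_le_self zero_le_two (by linarith [n.cast_nonneg (α := ℝ)])
  have hbern := one_add_mul_le_pow (a := -(2 / ((n : ℝ) + 2))) (by linarith) d
  rw [hn]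
  calc 1 - (1 + -(2 / ((n : ℝ) + 2))) ^ d ≤ 1 - (1 + d * -(2 / ((n : ℝ) + 2))) := by gcongr
    _ = 2 * d / (n + 2) := by ring

lemma measureReal_diff_smul_le (hK : Convex ℝ K) (hKb : IsBounded K) (h0 : (0 : E) ∈ K) (n : ℕ) :
    volume.real (K \ ((n : ℝ) / (n + 2)) • K) ≤
      2 * Module.finrank ℝ E / (n + 2) * volume.real K := by
  have hsub : ((n : ℝ) / (n + 2)) • K ⊆ K := by
    rintro _ ⟨x, hx, rfl⟩
    exact hK.smul_mem_of_zero_mem h0 hx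
      ⟨by positivity, div_le_one_of_le₀ (by linarith) (by positivity)⟩
  have hfin : volume (((n : ℝ) / (n + 2)) • K) ≠ ⊤ := (hKb.subset hsub).measure_lt_top.ne
  have hvol := measureReal_vadd_smul (r := (n : ℝ) / (n + 2)) (by positivity) 0 K
  rw [zero_vadd] at hvol
  rw [measureReal_def, measure_sdiff hsub ((hK.smul _).nullMeasurableSet volume) hfin,
    ENNReal.toReal_sub_of_le (measure_mono hsub) hKb.measure_lt_top.ne, ← measureReal_def,
    ← measureReal_def, hvol, ← one_sub_mul]
  gcongr
  exact one_sub_pow_div_le _ _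

lemma tendsto_convexCutoff (hK : Convex ℝ K) (hKo : IsOpen K) {η : E → ℝ}
    (hη : Function.support η ⊆ K) (hη' : ∀ x ∈ Function.support η, -x ∈ K)
    (hη1 : ∫ x, η x = 1) (x : E) :
    Tendsto (fun n => convexCutoff K η n x) atTop (𝓝 (𝟙[K] x)) := by
  by_cases hx : x ∈ K
  · have hlim : Tendsto (fun n : ℕ => (((n : ℝ) + 2) / n) • x) atTop (𝓝 x) := by
      have h : Tendsto (fun n : ℕ => 1 + 2 / (n : ℝ)) atTop (𝓝 (1 + 0)) :=
        tendsto_const_nhds.add (tendsto_const_div_atTop_nhds_zero_nat 2)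
      refine (by simpa using h.smul_const x : Tendsto _ _ (𝓝 x)).congr' ?_
      filter_upwards [eventually_ne_atTop 0] with n hn
      rw [add_div, div_self (Nat.cast_ne_zero.2 hn)]
    refine tendsto_const_nhds.congr' ?_
    filter_upwards [hlim (hKo.mem_nhds hx), eventually_ne_atTop 0] with n hn hn0
    rw [indicator_of_mem hx, convexCutoff_eq_integral hK hη' n ?_, hη1]
    rwa [mem_smul_set_iff_inv_smul_mem₀ (by positivity), inv_div]
  · simp only [indicator_of_notMem hx, convexCutoff_eq_zero hK hη _ hx, tendsto_const_nhds]

lemma isCutoff_convexCutoff (hK : Convex ℝ K) (hKo : IsOpen K) (hKb : IsBounded K) {η : E → ℝ}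
    (hηd : ContDiff ℝ 1 η) (hηc : HasCompactSupport η) (hη0 : ∀ x, 0 ≤ η x)
    (hη : Function.support η ⊆ K) (hη1 : ∫ x, η x = 1) (n : ℕ) :
    IsCutoff K (convexCutoff K η n) where
  contDiff := (contDiff_mollifiedIndicator (hKo.smul₀ (by positivity)).measurableSet hηd hηc).comp
    (contDiff_const_smul _)
  hasCompactSupport := HasCompactSupport.intro hKb.isCompact_closure fun _ hx =>
    convexCutoff_eq_zero hK hη n fun h => hx (subset_closure h)
  nonneg _ := mollifiedIndicator_nonneg _ hη0 _
  le_indicator x := by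
    by_cases hx : x ∈ K
    · rw [indicator_of_mem hx, ← hη1, ← integral_sub_left_eq_self η volume (((n : ℝ) + 2) • x)]
      exact setIntegral_le_integral ((hηd.continuous.integrable_of_hasCompactSupport
        hηc).comp_sub_left _) (Eventually.of_forall fun _ => hη0 _)
    · rw [indicator_of_notMem hx, convexCutoff_eq_zero hK hη n hx]

lemma isBVCutoffSeq_convexCutoff (hK : Convex ℝ K) (hKo : IsOpen K) (hKb : IsBounded K)
    (h0 : (0 : E) ∈ K) {η : E → ℝ} (hηd : ContDiff ℝ 1 η) (hηc : HasCompactSupport η)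
    (hη0 : ∀ x, 0 ≤ η x) (hη : Function.support η ⊆ K)
    (hη' : ∀ x ∈ Function.support η, -x ∈ K) (hη1 : ∫ x, η x = 1) :
    IsBVCutoffSeq K (2 * Module.finrank ℝ E * (∫ x, ‖fderiv ℝ η x‖) * volume.real K)
      (convexCutoff K η) where
  isCutoff := isCutoff_convexCutoff hK hKo hKb hηd hηc hη0 hη hη1
  tendsto := tendsto_convexCutoff hK hKo hη hη' hη1
  integral_norm_fderiv_le n := by
    have hv := isCutoff_convexCutoff hK hKo hKb hηd hηc hη0 hη hη1 n
    calc ∫ x, ‖fderiv ℝ (convexCutoff K η n) x‖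
        ≤ (n + 2) * (∫ x, ‖fderiv ℝ η x‖) * volume.real (K \ ((n : ℝ) / (n + 2)) • K) :=
          hv.integral_norm_fderiv_le hKb.measure_lt_top.ne
            (fun x hx => (convexCutoff_eq_integral hK hη' n hx).trans hη1)
            (norm_fderiv_convexCutoff_le hKo hηd hηc n)
      _ ≤ (n + 2) * (∫ x, ‖fderiv ℝ η x‖) *
          (2 * Module.finrank ℝ E / (n + 2) * volume.real K) := by
          gcongr
          exact measureReal_diff_smul_le hK hKb h0 n
      _ = 2 * Module.finrank ℝ E * (∫ x, ‖fderiv ℝ η x‖) * volume.real K := by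
          field_simp

lemma exists_isBVCutoffSeq (hK : Convex ℝ K) (hKo : IsOpen K) (hKb : IsBounded K)
    (hKne : K.Nonempty) : ∃ C v, IsBVCutoffSeq K C v := by
  obtain ⟨a, ha⟩ := hKne
  obtain ⟨r, hr, hball⟩ := Metric.isOpen_iff.1 hKo a ha
  have hball₀ : ball 0 r ⊆ -a +ᵥ K := fun x hx => by
    rw [mem_vadd_set_iff_neg_vadd_mem, neg_neg, vadd_eq_add]
    exact hball (by simpa using hx)
  let bump : ContDiffBump (0 : E) := ⟨r / 2, r, half_pos hr, half_lt_self hr⟩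
  have hsupp : Function.support (bump.normed volume) = ball 0 r := bump.support_normed_eq
  have h := isBVCutoffSeq_convexCutoff (hK.vadd (-a)) (hKo.vadd (-a)) (hKb.vadd (-a))
    (hball₀ (mem_ball_self hr)) (bump.contDiff_normed (n := 1)) bump.hasCompactSupport_normed
    (fun x => bump.nonneg_normed x) (hsupp.trans_subset hball₀)
    (fun x hx => hball₀ (by simpa [hsupp] using hx)) bump.integral_normed
  have ht := h.vadd_smul one_pos a
  rw [one_smul, vadd_vadd, add_neg_cancel, zero_vadd] at ht
  exact ⟨_, _, ht⟩

end ConvexBody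

end Cutoffs

section CoulombEnergy

variable {R : ℝ} {f : E3 → ℝ}

lemma integrableOn_inv_norm_ball (R : ℝ) : IntegrableOn (fun z : E3 => ‖z‖⁻¹) (ball 0 R) := by
  rw [integrableOn_fun_norm_addHaar (volume : Measure E3) (f := fun r : ℝ => r⁻¹)]
  refine ((continuous_id.integrableOn_Icc (a := (0 : ℝ)) (b := R)).mono_set
    Ioo_subset_Icc_self).congr_fun (fun y hy => ?_) measurableSet_Ioo
  have hy0 : y ≠ 0 := hy.1.ne'
  simp [pow_two, hy0]

/-- A measurable charge density with values in `[-1, 1]` that vanishes outside the ball of radius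
`R` around the origin. -/
structure IsBallDensity (R : ℝ) (f : E3 → ℝ) : Prop where
  measurable : Measurable f
  abs_le_indicator : ∀ x, |f x| ≤ 𝟙[ball 0 R] x

lemma isBallDensity_indicator (R : ℝ) : IsBallDensity R 𝟙[ball 0 R] where
  measurable := measurable_const.indicator measurableSet_ball
  abs_le_indicator x := (abs_of_nonneg (indicator_nonneg (fun _ _ => zero_le_one) x)).le

/-- The Coulomb self-interaction `∬ f(x) f(y) / |x - y| dx dy` of a charge density, without the
factor `1 / 2`. -/
def coulombIntegral (f : E3 → ℝ) : ℝ := ∫ z : E3 × E3, f z.1 * f z.2 / ‖z.1 - z.2‖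

namespace IsBallDensity

lemma abs_le_one (h : IsBallDensity R f) (x : E3) : |f x| ≤ 1 :=
  (h.abs_le_indicator x).trans (indicator_le_self' (fun _ _ => zero_le_one) x)

lemma eq_zero (h : IsBallDensity R f) {x : E3} (hx : x ∉ ball 0 R) : f x = 0 :=
  abs_nonpos_iff.1 ((h.abs_le_indicator x).trans_eq (indicator_of_notMem hx _))

lemma integrable (h : IsBallDensity R f) : Integrable f :=
  ((integrable_indicator_iff measurableSet_ball).2
    (integrableOn_const measure_ball_lt_top.ne)).mono' h.measurable.aestronglyMeasurable
    (Eventually.of_forall h.abs_le_indicator)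

lemma integrable_coulomb (h : IsBallDensity R f) :
    Integrable fun z : E3 × E3 => f z.1 * f z.2 / ‖z.1 - z.2‖ := by
  have hconv := h.integrable.norm.convolution_integrand (ContinuousLinearMap.mul ℝ ℝ)
    ((integrableOn_inv_norm_ball (2 * R)).integrable_indicator measurableSet_ball)
    (ν := volume) (μ := volume)
  have hf := h.measurable
  refine hconv.mono' (Measurable.aestronglyMeasurable (by fun_prop))
    (Eventually.of_forall fun ⟨x, y⟩ => ?_)
  change ‖f x * f y / ‖x - y‖‖ ≤ ‖f y‖ * (ball 0 (2 * R)).indicator (fun z => ‖z‖⁻¹) (x - y)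
  by_cases hx : x ∈ ball 0 R
  · by_cases hy : y ∈ ball 0 R
    · have hxy : x - y ∈ ball 0 (2 * R) := by
        rw [mem_ball_zero_iff] at *
        linarith [norm_sub_le x y]
      rw [indicator_of_mem hxy, norm_div, norm_mul, norm_norm, div_eq_mul_inv]
      gcongr
      exact mul_le_of_le_one_left (norm_nonneg _) (h.abs_le_one x)
    · simp [h.eq_zero hy]
  · rw [h.eq_zero hx, zero_mul, zero_div, norm_zero]
    exact mul_nonneg (norm_nonneg _) (indicator_nonneg (fun _ _ => by positivity) _)

lemma integral_integral_eq_coulombIntegral (h : IsBallDensity R f) :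
    ∫ x, ∫ y, f x * f y / ‖x - y‖ = coulombIntegral f :=
  (integral_prod _ h.integrable_coulomb).symm

lemma abs_coulombIntegral_le (h : IsBallDensity R f) :
    |coulombIntegral f| ≤ coulombIntegral 𝟙[ball (0 : E3) R] := by
  rw [coulombIntegral, ← Real.norm_eq_abs]
  refine norm_integral_le_of_norm_le (isBallDensity_indicator R).integrable_coulomb
    (Eventually.of_forall fun z => ?_)
  rw [norm_div, norm_mul, norm_norm]
  gcongr
  exacts [indicator_nonneg (fun _ _ => zero_le_one) _, h.abs_le_indicator _, h.abs_le_indicator _]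

end IsBallDensity

/-- The charge density `𝟙_Ω - ρ 𝟙_Λ` of a droplet configuration in its neutralizing background. -/
def netCharge (Λ : Set E3) (ρ : ℝ) (Ω : Set E3) (x : E3) : ℝ := 𝟙[Ω] x - ρ * 𝟙[Λ] x

lemma isBallDensity_netCharge {Λ Ω : Set E3} {ρ : ℝ} (hΛ : MeasurableSet Λ)
    (hΩ : MeasurableSet Ω) (hΩΛ : Ω ⊆ Λ) (hΛR : Λ ⊆ ball 0 R) (hρ0 : 0 ≤ ρ) (hρ1 : ρ ≤ 1) :
    IsBallDensity R (netCharge Λ ρ Ω) where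
  measurable := (measurable_const.indicator hΩ).sub ((measurable_const.indicator hΛ).const_mul ρ)
  abs_le_indicator x := by
    unfold netCharge
    by_cases hx : x ∈ Λ
    · rw [indicator_of_mem hx, indicator_of_mem (hΛR hx)]
      by_cases hy : x ∈ Ω
      · rw [indicator_of_mem hy, abs_le]; constructor <;> linarith
      · rw [indicator_of_notMem hy, abs_le]; constructor <;> linarith
    · rw [indicator_of_notMem hx, indicator_of_notMem (fun h => hx (hΩΛ h))]
      simpa using indicator_nonneg (by simp) _

lemma ldEnergy_eq {Λ Ω : Set E3} {ρ : ℝ} (h : IsBallDensity R (netCharge Λ ρ Ω)) :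
    ldEnergy Λ ρ Ω = per Ω + 1 / 2 * coulombIntegral (netCharge Λ ρ Ω) := by
  rw [← h.integral_integral_eq_coulombIntegral]
  rfl

end CoulombEnergy

section Perimeter

variable {Ω : Set E3} {φ : E3 → E3} {V : E3 → ℝ}

/-- An admissible test vector field in the definition of the perimeter. -/
structure IsTestField (φ : E3 → E3) : Prop where
  contDiff : ContDiff ℝ 1 φ
  hasCompactSupport : HasCompactSupport φ
  norm_le_one : ∀ x, ‖φ x‖ ≤ 1

/-- The trace as a continuous linear functional on the space of endomorphisms. -/
def traceCLM : (E3 →L[ℝ] E3) →L[ℝ] ℝ :=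
  LinearMap.toContinuousLinearMap
    ((LinearMap.trace ℝ E3).comp (ContinuousLinearMap.coeLM ℝ : (E3 →L[ℝ] E3) →ₗ[ℝ] _))

lemma traceCLM_smulRight (l : E3 →L[ℝ] ℝ) (y : E3) : traceCLM (l.smulRight y) = l y :=
  LinearMap.trace_smulRight (l : E3 →ₗ[ℝ] ℝ) y

lemma divg_eq_traceCLM (φ : E3 → E3) (x : E3) : divg φ x = traceCLM (fderiv ℝ φ x) := rfl

lemma continuous_divg (hφ : ContDiff ℝ 1 φ) : Continuous (divg φ) :=
  traceCLM.continuous.comp (hφ.continuous_fderiv one_ne_zero)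

lemma hasCompactSupport_divg (hφ : HasCompactSupport φ) : HasCompactSupport (divg φ) :=
  (hφ.fderiv ℝ).comp_left (g := traceCLM) (map_zero _)

lemma integrable_divg (hφ : ContDiff ℝ 1 φ) (hφc : HasCompactSupport φ) : Integrable (divg φ) :=
  (continuous_divg hφ).integrable_of_hasCompactSupport (hasCompactSupport_divg hφc)

lemma divg_smul (hV : ContDiff ℝ 1 V) (hφ : ContDiff ℝ 1 φ) (x : E3) :
    divg (fun x => V x • φ x) x = V x * divg φ x + fderiv ℝ V x (φ x) := by
  rw [divg_eq_traceCLM, fderiv_fun_smul (hV.differentiable one_ne_zero x)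
    (hφ.differentiable one_ne_zero x), map_add, traceCLM_smulRight, map_smul, divg_eq_traceCLM,
    smul_eq_mul]

lemma divg_sum {ι : Type*} [Fintype ι] {φ : ι → E3 → E3} (hφ : ∀ i, ContDiff ℝ 1 (φ i)) (x : E3) :
    divg (fun x => ∑ i, φ i x) x = ∑ i, divg (φ i) x := by
  rw [divg_eq_traceCLM, fderiv_fun_sum fun i _ => (hφ i).differentiable one_ne_zero x, map_sum]
  rfl

lemma divg_const_smul (c : ℝ) (hφ : ContDiff ℝ 1 φ) (x : E3) :
    divg (fun x => c • φ x) x = c * divg φ x := by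
  rw [divg_eq_traceCLM, fderiv_fun_const_smul (hφ.differentiable one_ne_zero x), map_smul]
  rfl

lemma integral_divg_eq_zero (hφ : ContDiff ℝ 1 φ) (hφc : HasCompactSupport φ) :
    ∫ x, divg φ x = 0 := by
  have hint : Integrable (fderiv ℝ φ) :=
    (hφ.continuous_fderiv one_ne_zero).integrable_of_hasCompactSupport (hφc.fderiv ℝ)
  have hzero : ∫ x, fderiv ℝ φ x = 0 := by
    ext1 e
    have hparts := integral_smul_fderiv_eq_neg_fderiv_smul_of_integrable (𝕜 := ℝ)
      (μ := (volume : Measure E3)) (f := fun _ => (1 : ℝ)) (g := φ) (v := e) (by simp)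
      (by simpa using hint.apply_continuousLinearMap e)
      (by simpa using hφ.continuous.integrable_of_hasCompactSupport hφc)
      (fun _ _ => differentiableAt_const _) fun x _ => hφ.differentiable one_ne_zero x
    rw [ContinuousLinearMap.integral_apply hint]
    simpa using hparts
  simp only [divg_eq_traceCLM]
  rw [ContinuousLinearMap.integral_comp_comm _ hint, hzero, map_zero]

lemma integrable_mul_divg (hV : Continuous V) (hφ : ContDiff ℝ 1 φ) (hφc : HasCompactSupport φ) :
    Integrable fun x => V x * divg φ x :=
  (hV.mul (continuous_divg hφ)).integrable_of_hasCompactSupport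
    (hasCompactSupport_divg hφc).mul_left

lemma integrable_fderiv_apply (hV : ContDiff ℝ 1 V) (hφ : Continuous φ)
    (hφc : HasCompactSupport φ) : Integrable fun x => fderiv ℝ V x (φ x) :=
  ((hV.continuous_fderiv one_ne_zero).clm_apply hφ).integrable_of_hasCompactSupport
    (hφc.mono fun x hx h0 => hx (by simp only [h0, map_zero]))

lemma setIntegral_divg_smul (hV : ContDiff ℝ 1 V) (hφ : ContDiff ℝ 1 φ)
    (hφc : HasCompactSupport φ) (Ω : Set E3) :
    ∫ x in Ω, divg (fun x => V x • φ x) x =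
      (∫ x in Ω, V x * divg φ x) + ∫ x in Ω, fderiv ℝ V x (φ x) := by
  simp only [divg_smul hV hφ]
  exact integral_add (integrable_mul_divg hV.continuous hφ hφc).integrableOn
    (integrable_fderiv_apply hV hφ.continuous hφc).integrableOn

lemma zero_mem_perCand (Ω : Set E3) : (0 : ℝ) ∈ perCand Ω :=
  ⟨fun _ => 0, contDiff_const, HasCompactSupport.zero, by simp, by simp [divg_eq_traceCLM]⟩

lemma IsTestField.norm_fderiv_apply_le (hφ : IsTestField φ) (V : E3 → ℝ) (x : E3) :
    ‖fderiv ℝ V x (φ x)‖ ≤ ‖fderiv ℝ V x‖ :=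
  ((fderiv ℝ V x).le_opNorm _).trans
    (mul_le_of_le_one_right (norm_nonneg _) (hφ.norm_le_one x))

lemma HasFinPer.per_nonneg (h : HasFinPer Ω) : 0 ≤ per Ω := le_csSup h (zero_mem_perCand Ω)

lemma HasFinPer.setIntegral_divg_le (h : HasFinPer Ω) (hφ : IsTestField φ) :
    ∫ x in Ω, divg φ x ≤ per Ω :=
  le_csSup h ⟨φ, hφ.contDiff, hφ.hasCompactSupport, hφ.norm_le_one, rfl⟩

lemma HasFinPer.setIntegral_divg_le_mul (h : HasFinPer Ω) {c : ℝ} (hc : 0 < c)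
    (hφ : ContDiff ℝ 1 φ) (hφc : HasCompactSupport φ) (hφn : ∀ x, ‖φ x‖ ≤ c) :
    ∫ x in Ω, divg φ x ≤ c * per Ω := by
  have hscaled : IsTestField fun x => c⁻¹ • φ x :=
    ⟨by fun_prop, hφc.smul_left (f := fun _ => c⁻¹), fun x => by
      rw [norm_smul, norm_inv, Real.norm_of_nonneg hc.le]
      exact (inv_mul_le_one₀ hc).2 (hφn x)⟩
  have hle := h.setIntegral_divg_le hscaled
  simp only [divg_const_smul _ hφ] at hle
  rwa [integral_const_mul, inv_mul_le_iff₀ hc] at hle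

lemma HasFinPer.sum_setIntegral_mul_divg_le (h : HasFinPer Ω) (hΩ : volume Ω ≠ ⊤) {ι : Type*}
    [Fintype ι] {V : ι → E3 → ℝ} {φ : ι → E3 → E3} {c C : ℝ} (hc : 0 < c)
    (hV : ∀ i, ContDiff ℝ 1 (V i)) (hV0 : ∀ i x, 0 ≤ V i x) (hVc : ∀ x, ∑ i, V i x ≤ c)
    (hVC : ∀ x, ∑ i, ‖fderiv ℝ (V i) x‖ ≤ C) (hφ : ∀ i, IsTestField (φ i)) :
    ∑ i, ∫ x in Ω, V i x * divg (φ i) x ≤ c * per Ω + C * vol Ω := by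
  have hVφ : ∀ i, ContDiff ℝ 1 fun x => V i x • φ i x := fun i => (hV i).smul (hφ i).contDiff
  have hsupp : HasCompactSupport fun x => ∑ i, V i x • φ i x :=
    HasCompactSupport.intro (isCompact_iUnion fun i => (hφ i).hasCompactSupport) fun x hx =>
      Finset.sum_eq_zero fun i _ => by
        rw [image_eq_zero_of_notMem_tsupport fun h => hx (mem_iUnion_of_mem i h), smul_zero]
  have hnorm : ∀ x, ‖∑ i, V i x • φ i x‖ ≤ c := fun x =>
    (norm_sum_le_of_le _ fun i _ => by
      rw [norm_smul, Real.norm_of_nonneg (hV0 i x)]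
      exact mul_le_of_le_one_right (hV0 i x) ((hφ i).norm_le_one x)).trans (hVc x)
  have hper := h.setIntegral_divg_le_mul hc (ContDiff.sum fun i _ => hVφ i) hsupp hnorm
  have hint : ∀ i, Integrable (divg fun x => V i x • φ i x) := fun i =>
    integrable_divg (hVφ i) ((hφ i).hasCompactSupport.smul_left (f := V i))
  have hint' : ∀ i, Integrable fun x => fderiv ℝ (V i) x (φ i x) := fun i =>
    integrable_fderiv_apply (hV i) (hφ i).contDiff.continuous (hφ i).hasCompactSupport
  have hgrad : ‖∫ x in Ω, ∑ i, fderiv ℝ (V i) x (φ i x)‖ ≤ C * vol Ω :=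
    norm_setIntegral_le_of_norm_le_const hΩ.lt_top fun x _ =>
      (norm_sum_le_of_le _ fun i _ => (hφ i).norm_fderiv_apply_le (V i) x).trans (hVC x)
  simp only [divg_sum hVφ] at hper
  rw [integral_finsetSum _ fun i _ => (hint i).integrableOn] at hper
  simp only [fun i => setIntegral_divg_smul (hV i) (hφ i).contDiff (hφ i).hasCompactSupport Ω,
    Finset.sum_add_distrib] at hper
  rw [integral_finsetSum _ fun i _ => (hint' i).integrableOn] at hgrad
  linarith [(abs_le.1 hgrad).1]

lemma integrable_comp_sub_mul {A : Set E3} (hA : volume A ≠ ⊤) {u g : E3 → ℝ} (hu : Measurable u)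
    (hu1 : ∀ x, |u x| ≤ 1) (hg : Integrable g) (Ω : Set E3) :
    Integrable (fun z : E3 × E3 => u (z.2 - z.1) * g z.2)
      ((volume.restrict A).prod (volume.restrict Ω)) := by
  have : IsFiniteMeasure (volume.restrict A) := isFiniteMeasure_restrict.2 hA
  exact (hg.integrableOn.integrable.comp_snd _).bdd_mul
    (Measurable.aestronglyMeasurable (by fun_prop)) (Eventually.of_forall fun _ => hu1 _)

lemma setIntegral_mollifiedIndicator_mul {A : Set E3} (hA : volume A ≠ ⊤) {u g : E3 → ℝ}
    (hu : Measurable u) (hu1 : ∀ x, |u x| ≤ 1) (hg : Integrable g) (Ω : Set E3) :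
    ∫ x in Ω, mollifiedIndicator A u x * g x =
      ∫ z, u (z.2 - z.1) * g z.2 ∂((volume.restrict A).prod (volume.restrict Ω)) := by
  rw [integral_prod_symm _ (integrable_comp_sub_mul hA hu hu1 hg Ω)]
  simp only [mollifiedIndicator, integral_mul_const]

lemma IsBVCutoffSeq.tendsto_setIntegral_mollifiedIndicator_mul {K A : Set E3} {C : ℝ}
    {v : ℕ → E3 → ℝ} (h : IsBVCutoffSeq K C v) (hK : MeasurableSet K) (hA : volume A ≠ ⊤)
    {g : E3 → ℝ} (hg : Integrable g) (Ω : Set E3) :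
    Tendsto (fun n => ∫ x in Ω, mollifiedIndicator A (v n) x * g x) atTop
      (𝓝 (∫ τ in A, ∫ x in Ω, 𝟙[K] (x - τ) * g x)) := by
  have hKm : Measurable 𝟙[K] := measurable_const.indicator hK
  have hK1 : ∀ x, |𝟙[K] x| ≤ 1 := fun x => by by_cases hx : x ∈ K <;> simp [hx]
  have hv : ∀ n, Measurable (v n) := fun n => (h.isCutoff n).contDiff.continuous.measurable
  have : IsFiniteMeasure (volume.restrict A) := isFiniteMeasure_restrict.2 hA
  rw [← integral_prod _ (integrable_comp_sub_mul hA hKm hK1 hg Ω)]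
  simp only [fun n => setIntegral_mollifiedIndicator_mul hA (hv n) (h.isCutoff n).abs_le_one hg Ω]
  refine tendsto_integral_of_dominated_convergence (fun z => ‖g z.2‖)
    (fun n => (integrable_comp_sub_mul hA (hv n) (h.isCutoff n).abs_le_one hg
      Ω).aestronglyMeasurable) (hg.integrableOn.integrable.comp_snd _).norm
    (fun n => Eventually.of_forall fun z => ?_)
    (Eventually.of_forall fun z => (h.tendsto _).mul_const _)
  rw [norm_mul]
  exact mul_le_of_le_one_left (norm_nonneg _) ((h.isCutoff n).abs_le_one _)

-- The mollified fields `∑ᵢ (𝟙_{Aᵢ} * vₙ) φᵢ` are admissible up to the factor `|K|`, because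
-- `∑ᵢ 𝟙_{Aᵢ} * vₙ ≤ ∫ vₙ ≤ |K|` for disjoint `Aᵢ`.
lemma HasFinPer.sum_setIntegral_localized_divg_le (h : HasFinPer Ω) (hΩ : volume Ω ≠ ⊤)
    {K : Set E3} (hK : MeasurableSet K) (hKv : volume K ≠ ⊤) (hK0 : 0 < vol K) {C : ℝ}
    {v : ℕ → E3 → ℝ} (hv : IsBVCutoffSeq K C v) {ι : Type*} [Fintype ι] {φ : ι → E3 → E3}
    (hφ : ∀ i, IsTestField (φ i)) {A : ι → Set E3} (hA : ∀ i, MeasurableSet (A i))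
    (hAv : ∀ i, volume (A i) ≠ ⊤) (hd : Pairwise (Function.onFun Disjoint A)) :
    ∑ i, ∫ τ in A i, ∫ x in Ω, 𝟙[K] (x - τ) * divg (φ i) x ≤ vol K * per Ω + C * vol Ω := by
  refine le_of_tendsto' (tendsto_finsetSum _ fun i _ =>
    hv.tendsto_setIntegral_mollifiedIndicator_mul hK (hAv i)
      (integrable_divg (hφ i).contDiff (hφ i).hasCompactSupport) Ω) fun n => ?_
  have hvn := hv.isCutoff n
  refine h.sum_setIntegral_mul_divg_le hΩ hK0
    (fun i => contDiff_mollifiedIndicator (hA i) hvn.contDiff hvn.hasCompactSupport)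
    (fun i => mollifiedIndicator_nonneg _ hvn.nonneg) (fun x => ?_) (fun x => ?_) hφ
  · exact (sum_setIntegral_sub_le_integral hA hd hvn.integrable hvn.nonneg x).trans
      (hvn.integral_le_measureReal hK hKv)
  · exact (sum_norm_fderiv_mollifiedIndicator_le hA hd hvn.contDiff hvn.hasCompactSupport
      x).trans (hv.integral_norm_fderiv_le n)

lemma IsBVCutoffSeq.hasFinPer {K : Set E3} {C : ℝ} {v : ℕ → E3 → ℝ} (h : IsBVCutoffSeq K C v)
    (hK : MeasurableSet K) : HasFinPer K := by
  refine ⟨C, ?_⟩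
  rintro a ⟨φ, hφ, hφc, hφ1, rfl⟩
  have hdiv := integrable_divg hφ hφc
  have hle : ∀ n, ∫ x, v n x * divg φ x ≤ C := fun n => by
    have hvn := h.isCutoff n
    have hparts := setIntegral_divg_smul hvn.contDiff hφ hφc univ
    rw [setIntegral_univ, setIntegral_univ, setIntegral_univ] at hparts
    have hzero : ∫ x, divg (fun x => v n x • φ x) x = 0 :=
      integral_divg_eq_zero (hvn.contDiff.smul hφ) (hφc.smul_left (f := v n))
    have hgrad : ‖∫ x, fderiv ℝ (v n) x (φ x)‖ ≤ C :=
      (norm_integral_le_of_norm_le hvn.integrable_fderiv.norm (Eventually.of_forall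
        (IsTestField.norm_fderiv_apply_le ⟨hφ, hφc, hφ1⟩ (v n)))).trans
        (h.integral_norm_fderiv_le n)
    linarith [(abs_le.1 hgrad).1]
  have hlim : Tendsto (fun n => ∫ x, v n x * divg φ x) atTop (𝓝 (∫ x, 𝟙[K] x * divg φ x)) := by
    refine tendsto_integral_of_dominated_convergence (fun x => ‖divg φ x‖)
      (fun n => (integrable_mul_divg (h.isCutoff n).contDiff.continuous hφ
        hφc).aestronglyMeasurable) hdiv.norm (fun n => Eventually.of_forall fun x => ?_)
      (Eventually.of_forall fun x => (h.tendsto x).mul_const _)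
    rw [norm_mul]
    exact mul_le_of_le_one_left (norm_nonneg _) ((h.isCutoff n).abs_le_one x)
  rw [← integral_indicator hK]
  refine (le_of_tendsto' hlim hle).trans_eq' (integral_congr_ae (Eventually.of_forall fun x => ?_))
  by_cases hx : x ∈ K <;> simp [hx]

end Perimeter

section Barycentric

variable {ι E : Type*} [AddCommGroup E] [Module ℝ E] (b : AffineBasis ι ℝ E)

lemma coord_linear_eq_sub (i : ι) (x : E) : (b.coord i).linear x = b.coord i x - b.coord i 0 := by
  simpa using congrFun (b.coord i).decomp' x

lemma coord_homothety [Fintype ι] {r : ℝ} (hr : r ≠ 0) {c : ι → ℝ} (hc : ∑ j, c j = 1 - r)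
    (i : ι) (x : E) :
    b.coord i (r⁻¹ • (x - ∑ j, c j • b j)) = r⁻¹ * (b.coord i x - c i) := by
  classical
  have hvertex : ∀ j, c j * (b.coord i).linear (b j) =
      (if i = j then c j else 0) - c j * b.coord i 0 := fun j => by
    rw [coord_linear_eq_sub, b.coord_apply]
    split_ifs <;> ring
  have hcenter : (b.coord i).linear (∑ j, c j • b j) = c i - (1 - r) * b.coord i 0 := by
    simp only [map_sum, map_smul, smul_eq_mul, hvertex, Finset.sum_sub_distrib, ← Finset.sum_mul,
      hc, Finset.sum_ite_eq, Finset.mem_univ, if_true]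
  have h := coord_linear_eq_sub b i (r⁻¹ • (x - ∑ j, c j • b j))
  rw [map_smul, map_sub, hcenter, coord_linear_eq_sub, smul_eq_mul] at h
  rw [sub_eq_iff_eq_add.1 h.symm]
  field_simp
  ring

end Barycentric

section Simplex

variable {ι E : Type*} [Fintype ι] [NormedAddCommGroup E] [InnerProductSpace ℝ E]
  (b : AffineBasis ι ℝ E)

lemma setOf_lt_coord_eq_vadd_smul {c : ι → ℝ} (hc : ∑ j, c j < 1) :
    {x | ∀ i, c i < b.coord i x} =
      (∑ j, c j • b j) +ᵥ (1 - ∑ j, c j) • {x | ∀ i, 0 < b.coord i x} := by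
  have hr : 0 < 1 - ∑ j, c j := sub_pos.2 hc
  ext x
  rw [mem_vadd_smul_set_iff hr.ne']
  refine forall_congr' fun i => ?_
  rw [coord_homothety b hr.ne' (sub_sub_cancel _ _).symm, mul_pos_iff_of_pos_left (inv_pos.2 hr),
    sub_pos]

variable [FiniteDimensional ℝ E] [MeasurableSpace E] [BorelSpace E]

lemma measureReal_lt_coord [Nontrivial E] (c : ι → ℝ) :
    volume.real {x | ∀ i, c i < b.coord i x} =
      volume.real {x | ∀ i, 0 < b.coord i x} * max (1 - ∑ j, c j) 0 ^ Module.finrank ℝ E := by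
  rcases lt_or_ge (∑ j, c j) 1 with hc | hc
  · rw [setOf_lt_coord_eq_vadd_smul b hc, measureReal_vadd_smul (sub_pos.2 hc).le,
      max_eq_left (sub_pos.2 hc).le, mul_comm]
  · have hempty : {x | ∀ i, c i < b.coord i x} = ∅ := by
      refine eq_empty_of_forall_notMem fun x hx => hc.not_gt ?_
      have := b.nonempty
      rw [← b.sum_coord_apply_eq_one x]
      exact Finset.sum_lt_sum_of_nonempty Finset.univ_nonempty fun i _ => hx i
    rw [hempty, max_eq_right (sub_nonpos.2 hc), zero_pow Module.finrank_pos.ne', mul_zero,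
      measureReal_empty]

lemma measureReal_inter_translate_simplex [Nontrivial E] (z : E) :
    volume.real (interior (convexHull ℝ (range b)) ∩
        {u | u - z ∈ interior (convexHull ℝ (range b))}) =
      volume.real (interior (convexHull ℝ (range b))) *
        max (1 - ∑ i, max ((b.coord i).linear z) 0) 0 ^ Module.finrank ℝ E := by
  rw [b.interior_convexHull, ← measureReal_lt_coord b]
  congr 1
  ext u
  have hsub : ∀ i, b.coord i (u - z) = b.coord i u - (b.coord i).linear z := fun i => by
    have h := coord_linear_eq_sub b i (u - z)
    rw [map_sub, coord_linear_eq_sub b i u] at h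
    linarith
  simp only [mem_inter_iff, mem_ofPred_eq, ← forall_and, hsub, sub_pos, max_lt_iff, and_comm]

end Simplex

section Tetrahedron

variable {Δ : Set E3} {p : E3 → ℝ}

/-- A gauge `p` such that the covariogram `|K ∩ (K + z)|` of `K` is `|K| (1 - p z)₊ ^ 3`. -/
structure IsCovariogramGauge (K : Set E3) (p : E3 → ℝ) : Prop where
  measureReal_inter : ∀ z, volume.real (K ∩ {u | u - z ∈ K}) = volume.real K * max (1 - p z) 0 ^ 3
  continuous : Continuous p
  nonneg : ∀ z, 0 ≤ p z
  map_smul : ∀ (t : ℝ) (z : E3), 0 ≤ t → p (t • z) = t * p z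

namespace IsTetra

lemma exists_affineBasis (h : IsTetra Δ) :
    ∃ b : AffineBasis (Fin 4) ℝ E3, Δ = interior (convexHull ℝ (range b)) := by
  obtain ⟨v, hv, rfl⟩ := h
  have htop : affineSpan ℝ (range v) = ⊤ := by
    rw [hv.affineSpan_eq_top_iff_card_eq_finrank_add_one]
    simp
  exact ⟨⟨v, hv, htop⟩, rfl⟩

lemma isOpen (h : IsTetra Δ) : IsOpen Δ := by
  obtain ⟨v, -, rfl⟩ := h
  exact isOpen_interior

lemma isBounded (h : IsTetra Δ) : IsBounded Δ := by
  obtain ⟨v, -, rfl⟩ := h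
  exact (isBounded_convexHull.2 (finite_range v).isBounded).subset interior_subset

lemma convex (h : IsTetra Δ) : Convex ℝ Δ := by
  obtain ⟨v, -, rfl⟩ := h
  exact (convex_convexHull ℝ _).interior

lemma nonempty (h : IsTetra Δ) : Δ.Nonempty := by
  obtain ⟨b, rfl⟩ := h.exists_affineBasis
  exact ⟨_, b.centroid_mem_interior_convexHull⟩

lemma smul (h : IsTetra Δ) {r : ℝ} (hr : r ≠ 0) : IsTetra (r • Δ) := by
  obtain ⟨v, hv, rfl⟩ := h
  refine ⟨r • v, ?_, ?_⟩
  · let e : E3 ≃ᵃ[ℝ] E3 := (LinearEquiv.smulOfNeZero ℝ E3 r hr).toAffineEquiv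
    exact (e.affineIndependent_iff (p := v)).2 hv
  · rw [← interior_smul₀ hr, ← convexHull_smul, ← range_smul]
    rfl

lemma exists_isCovariogramGauge (h : IsTetra Δ) : ∃ p, IsCovariogramGauge Δ p := by
  obtain ⟨b, rfl⟩ := h.exists_affineBasis
  have _ : ∀ i, Continuous (b.coord i).linear := fun i =>
    LinearMap.continuous_of_finiteDimensional _
  refine ⟨fun z => ∑ i, max ((b.coord i).linear z) 0, fun z => ?_, by fun_prop,
    fun z => Finset.sum_nonneg fun i _ => le_max_right _ _, fun t z ht => ?_⟩
  · rw [measureReal_inter_translate_simplex, finrank_euclideanSpace_fin]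
  · simp only [Finset.mul_sum, _root_.map_smul, smul_eq_mul, mul_max_of_nonneg _ _ ht, mul_zero]

end IsTetra

end Tetrahedron

section OrthogonalGroup

variable {E : Type*} [NormedAddCommGroup E] [InnerProductSpace ℝ E] [FiniteDimensional ℝ E]

instance : CompactSpace (unitary (E →L[ℝ] E)) := by
  refine isCompact_iff_compactSpace.1 (Metric.isCompact_of_isClosed_isBounded ?_ ?_)
  · simp only [SetLike.coe]
    exact (isClosed_eq (by fun_prop) continuous_const).inter
      (isClosed_eq (by fun_prop) continuous_const)
  · exact isBounded_iff_forall_norm_le.2 ⟨1, fun U hU =>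
      ContinuousLinearMap.opNorm_le_bound _ zero_le_one fun x =>
        ((Unitary.linearIsometryEquiv ⟨U, hU⟩).norm_map x).le.trans (one_mul _).ge⟩

variable (E) in
lemma exists_rightInvariant_probabilityMeasure :
    ∃ μ : Measure (unitary (E →L[ℝ] E)), IsProbabilityMeasure μ ∧ μ.IsMulRightInvariant := by
  refine ⟨(Measure.haarMeasure ⊤).inv, ⟨?_⟩, inferInstance⟩
  rw [Measure.inv_apply, inv_univ]
  exact Measure.haarMeasure_self

lemma exists_unitary_apply_eq {x y : E} (h : ‖x‖ = ‖y‖) :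
    ∃ V : unitary (E →L[ℝ] E), (V : E →L[ℝ] E) x = y :=
  ⟨Unitary.linearIsometryEquiv.symm (ℝ ∙ (x - y))ᗮ.reflection, Submodule.reflection_sub h⟩

variable (μ : Measure (unitary (E →L[ℝ] E)))

lemma integral_unitary_apply_congr [μ.IsMulRightInvariant] (g : E → ℝ) {x y : E}
    (h : ‖x‖ = ‖y‖) :
    ∫ U, g ((U : E →L[ℝ] E) x) ∂μ = ∫ U, g ((U : E →L[ℝ] E) y) ∂μ := by
  obtain ⟨V, rfl⟩ := exists_unitary_apply_eq h
  exact (integral_mul_right_eq_self (fun U : unitary (E →L[ℝ] E) => g ((U : E →L[ℝ] E) x)) V).symm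

variable [IsProbabilityMeasure μ]

lemma continuous_integral_unitary_apply {g : E → ℝ} (hg : Continuous g) :
    Continuous fun x => ∫ U, g ((U : E →L[ℝ] E) x) ∂μ := by
  have h : Continuous (Function.uncurry
      fun (x : E) (U : unitary (E →L[ℝ] E)) => g ((U : E →L[ℝ] E) x)) := by
    unfold Function.uncurry
    fun_prop
  simpa using continuous_parametric_integral_of_continuous (μ := μ) h isCompact_univ

variable [MeasurableSpace E] [BorelSpace E]

lemma setIntegral_ball_unitary_average {g : E → ℝ} (hg : Continuous g) (r : ℝ) :
    ∫ x in ball (0 : E) r, ∫ U, g ((U : E →L[ℝ] E) x) ∂μ = ∫ x in ball (0 : E) r, g x := by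
  have hrot : ∀ U : unitary (E →L[ℝ] E),
      ∫ x in ball (0 : E) r, g ((U : E →L[ℝ] E) x) = ∫ x in ball (0 : E) r, g x := fun U => by
    let A := Unitary.linearIsometryEquiv U
    have h := A.measurePreserving.setIntegral_preimage_emb A.toHomeomorph.measurableEmbedding g
      (ball 0 r)
    rwa [A.preimage_ball, map_zero] at h
  have hcont : Continuous fun w : E × unitary (E →L[ℝ] E) => g ((w.2 : E →L[ℝ] E) w.1) := by
    fun_prop
  have hint : Integrable (fun w : E × unitary (E →L[ℝ] E) => g ((w.2 : E →L[ℝ] E) w.1))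
      ((volume.restrict (ball 0 r)).prod μ) := by
    rw [← Measure.restrict_univ (μ := μ), Measure.prod_restrict]
    exact (hcont.continuousOn.integrableOn_compact
      ((isCompact_closedBall 0 r).prod isCompact_univ)).mono_set
        (prod_mono ball_subset_closedBall Subset.rfl)
  rw [integral_integral_swap hint]
  simp only [hrot, integral_const, probReal_univ, one_smul]

end OrthogonalGroup

section SphericalMean

lemma measureReal_setOf_sq_add_sq_lt (s : ℝ) :
    volume.real {y : Fin 2 → ℝ | y 0 ^ 2 + y 1 ^ 2 < s} = Real.pi * max s 0 := by
  have hmeas : MeasurableSet {y : Fin 2 → ℝ | y 0 ^ 2 + y 1 ^ 2 < s} :=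
    measurableSet_lt (by fun_prop) measurable_const
  have hball : WithLp.ofLp ⁻¹' {y : Fin 2 → ℝ | y 0 ^ 2 + y 1 ^ 2 < s} =
      ball (0 : EuclideanSpace ℝ (Fin 2)) √s := by
    ext y
    simp [EuclideanSpace.norm_eq, Real.sqrt_lt_sqrt_iff (add_nonneg (sq_nonneg _) (sq_nonneg _))]
  rw [measureReal_def, ← (PiLp.volume_preserving_ofLp (Fin 2)).measure_preimage
    hmeas.nullMeasurableSet, hball, EuclideanSpace.volume_ball_fin_two, ENNReal.toReal_mul,
    ENNReal.toReal_pow, ENNReal.toReal_ofReal (Real.sqrt_nonneg _),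
    ENNReal.toReal_ofReal Real.pi_pos.le, mul_comm]
  rcases le_total 0 s with h | h
  · rw [Real.sq_sqrt h, max_eq_left h]
  · rw [Real.sqrt_eq_zero_of_nonpos h, max_eq_right h, sq, zero_mul]

/-- The splitting of `E3` into the first coordinate and the other two. -/
def splitFirst : E3 ≃ᵐ ℝ × (Fin 2 → ℝ) :=
  (MeasurableEquiv.toLp 2 (Fin 3 → ℝ)).symm.trans
    (MeasurableEquiv.piFinSuccAbove (fun _ : Fin 3 => ℝ) 0)

lemma measurePreserving_splitFirst : MeasurePreserving splitFirst volume volume :=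
  (volume_preserving_piFinSuccAbove (fun _ : Fin 3 => ℝ) 0).comp
    (EuclideanSpace.volume_preserving_symm_measurableEquiv_toLp (Fin 3))

lemma mem_ball_iff_splitFirst {r : ℝ} (hr : 0 < r) (x : E3) : x ∈ ball (0 : E3) r ↔
    (splitFirst x).2 0 ^ 2 + (splitFirst x).2 1 ^ 2 < r ^ 2 - (splitFirst x).1 ^ 2 := by
  have h1 : (splitFirst x).1 = x 0 := rfl
  have h2 : (splitFirst x).2 0 = x 1 := rfl
  have h3 : (splitFirst x).2 1 = x 2 := rfl
  rw [h1, h2, h3, mem_ball_zero_iff, EuclideanSpace.norm_eq, Real.sqrt_lt' hr,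
    Fin.sum_univ_three, lt_sub_iff_add_lt]
  simp only [Real.norm_eq_abs, sq_abs]
  rw [add_assoc, add_comm]

lemma setIntegral_ball_apply_zero {F : ℝ → ℝ} (hF : Continuous F) {r : ℝ} (hr : 0 < r) :
    ∫ x in ball (0 : E3) r, F (x 0) = ∫ t, Real.pi * max (r ^ 2 - t ^ 2) 0 * F t := by
  set S : Set (ℝ × (Fin 2 → ℝ)) := {q | q.2 0 ^ 2 + q.2 1 ^ 2 < r ^ 2 - q.1 ^ 2}
  have hS : MeasurableSet S := measurableSet_lt (by fun_prop) (by fun_prop)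
  have hpre : splitFirst ⁻¹' S = ball 0 r := ext fun x => (mem_ball_iff_splitFirst hr x).symm
  have hsection : ∀ t, ∫ y, S.indicator (fun q => F q.1) (t, y) =
      Real.pi * max (r ^ 2 - t ^ 2) 0 * F t := fun t => by
    have hSt : MeasurableSet {y : Fin 2 → ℝ | y 0 ^ 2 + y 1 ^ 2 < r ^ 2 - t ^ 2} :=
      measurableSet_lt (by fun_prop) measurable_const
    rw [← measureReal_setOf_sq_add_sq_lt, ← smul_eq_mul]
    exact integral_indicator_const (μ := volume) (F t) hSt
  have hball : IntegrableOn (fun x : E3 => F (x 0)) (ball 0 r) := by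
    have hcont : Continuous fun x : E3 => F (x 0) := by fun_prop
    exact (hcont.continuousOn.integrableOn_compact (isCompact_closedBall 0 r)).mono_set
      ball_subset_closedBall
  have hint : IntegrableOn (fun q : ℝ × (Fin 2 → ℝ) => F q.1) S := by
    rw [← hpre] at hball
    exact (measurePreserving_splitFirst.integrableOn_comp_preimage
      splitFirst.measurableEmbedding).1 hball
  calc ∫ x in ball (0 : E3) r, F (x 0) = ∫ q in S, F q.1 := by
        rw [← hpre]
        exact measurePreserving_splitFirst.setIntegral_preimage_emb
          splitFirst.measurableEmbedding (fun q => F q.1) S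
    _ = ∫ q, S.indicator (fun q => F q.1) q := (integral_indicator hS).symm
    _ = ∫ t, ∫ y, S.indicator (fun q => F q.1) (t, y) :=
        integral_prod _ ((integrable_indicator_iff hS).2 hint)
    _ = _ := by simp only [hsection]

lemma setIntegral_ball_apply_zero_eq_intervalIntegral {F : ℝ → ℝ} (hF : Continuous F) {r : ℝ}
    (hr : 0 < r) : ∫ x in ball (0 : E3) r, F (x 0) =
      Real.pi * (r ^ 2 * (∫ t in -r..r, F t) - ∫ t in -r..r, t ^ 2 * F t) := by
  have hind : ∀ t, Real.pi * max (r ^ 2 - t ^ 2) 0 * F t =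
      (Ioc (-r) r).indicator (fun t => Real.pi * (r ^ 2 * F t - t ^ 2 * F t)) t := fun t => by
    by_cases ht : t ∈ Ioc (-r) r
    · rw [indicator_of_mem ht, max_eq_left]
      · ring
      · nlinarith [ht.1, ht.2]
    · rw [indicator_of_notMem ht, max_eq_right, mul_zero, zero_mul]
      rw [mem_Ioc, not_and_or, not_lt, not_le] at ht
      rcases ht with h | h <;> nlinarith
  rw [setIntegral_ball_apply_zero hF hr, ← intervalIntegral.integral_const_mul,
    ← intervalIntegral.integral_sub (Continuous.intervalIntegrable (by fun_prop) _ _)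
      (Continuous.intervalIntegrable (by fun_prop) _ _), ← intervalIntegral.integral_const_mul,
    intervalIntegral.integral_of_le (by linarith), ← integral_indicator measurableSet_Ioc]
  exact integral_congr_ae (.of_forall hind)

lemma setIntegral_ball_fun_norm {m : ℝ → ℝ} {r : ℝ} (hr : 0 ≤ r) :
    ∫ x in ball (0 : E3) r, m ‖x‖ = 4 * Real.pi * ∫ s in 0..r, s ^ 2 * m s := by
  have h := integral_fun_norm_addHaar (volume : Measure E3) ((Iio r).indicator m)
  have hnorm : ∀ x : E3, (Iio r).indicator m ‖x‖ = (ball (0 : E3) r).indicator (fun x => m ‖x‖) x :=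
    fun x => indicator_eq_indicator (by simp) rfl
  have hvol : (volume : Measure E3).real (ball 0 1) = Real.pi * 4 / 3 := by
    rw [measureReal_def, EuclideanSpace.volume_ball_fin_three]
    simp only [ENNReal.ofReal_one, one_pow, one_mul]
    exact ENNReal.toReal_ofReal (by positivity)
  have hpow : ∀ s, s ^ 2 • (Iio r).indicator m s = (Iio r).indicator (fun s => s ^ 2 * m s) s :=
    fun s => (indicator_smul_apply (Iio r) (fun s => s ^ 2) m s).symm
  simp only [hnorm, integral_indicator measurableSet_ball] at h
  rw [h, hvol, finrank_euclideanSpace_fin]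
  simp only [hpow, Nat.add_one_sub_one]
  rw [setIntegral_indicator measurableSet_Iio, Ioi_inter_Iio, intervalIntegral.integral_of_le hr,
    integral_Ioc_eq_integral_Ioo, nsmul_eq_mul, smul_eq_mul]
  push_cast
  ring

lemma hasDerivAt_integral_neg_to_self {F : ℝ → ℝ} (hF : Continuous F) (r : ℝ) :
    HasDerivAt (fun r => ∫ t in -r..r, F t) (F r + F (-r)) r := by
  have hsplit : ∀ r, ∫ t in -r..r, F t = (∫ t in 0..r, F t) - ∫ t in 0..-r, F t := fun r =>
    (intervalIntegral.integral_interval_sub_left (hF.intervalIntegrable _ _)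
      (hF.intervalIntegrable _ _)).symm
  simp only [hsplit]
  refine ((hF.integral_hasStrictDerivAt 0 r).hasDerivAt.fun_sub
    ((hF.integral_hasStrictDerivAt 0 (-r)).hasDerivAt.scomp r (hasDerivAt_neg r))).congr_deriv ?_
  rw [neg_smul, one_smul, sub_neg_eq_add]


/-- Archimedes' hat-box theorem. -/
lemma integral_unitary_apply_zero (μ : Measure (unitary (E3 →L[ℝ] E3))) [IsProbabilityMeasure μ]
    [μ.IsMulRightInvariant] {F : ℝ → ℝ} (hF : Continuous F) {x : E3} (hx : x ≠ 0) :
    ∫ U, F ((U : E3 →L[ℝ] E3) x 0) ∂μ = (2 * ‖x‖)⁻¹ * ∫ t in -‖x‖..‖x‖, F t := by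
  have hF0 : Continuous fun y : E3 => F (y 0) := by fun_prop
  have hF2 : Continuous fun t => t ^ 2 * F t := by fun_prop
  set m : ℝ → ℝ := fun r =>
    ∫ U, F ((U : E3 →L[ℝ] E3) (EuclideanSpace.single 0 r) 0) ∂μ
  have hm : ∀ y : E3, ∫ U, F ((U : E3 →L[ℝ] E3) y 0) ∂μ = m ‖y‖ := fun y =>
    integral_unitary_apply_congr μ (fun y : E3 => F (y 0)) (by simp)
  have hmc : Continuous m := by
    have hs : Continuous fun r : ℝ => (EuclideanSpace.single 0 r : E3) :=
      (Isometry.of_dist_eq (PiLp.dist_single_same 2 (fun _ : Fin 3 => ℝ) 0)).continuous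
    exact (continuous_integral_unitary_apply μ hF0).comp hs
  have hball : ∀ r > 0, 4 * Real.pi * (∫ s in 0..r, s ^ 2 * m s) =
      Real.pi * (r ^ 2 * (∫ t in -r..r, F t) - ∫ t in -r..r, t ^ 2 * F t) := fun r hr => by
    rw [← setIntegral_ball_apply_zero_eq_intervalIntegral hF hr, ← setIntegral_ball_fun_norm hr.le,
      ← setIntegral_ball_unitary_average μ hF0 r]
    simp only [hm]
  have hpos : 0 < ‖x‖ := norm_pos_iff.2 hx
  have hleft : HasDerivAt (fun r => 4 * Real.pi * ∫ s in 0..r, s ^ 2 * m s)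
      (4 * Real.pi * (‖x‖ ^ 2 * m ‖x‖)) ‖x‖ :=
    (((continuous_pow 2).mul hmc).integral_hasStrictDerivAt 0 ‖x‖).hasDerivAt.const_mul _
  have hright := (((hasDerivAt_pow 2 ‖x‖).fun_mul (hasDerivAt_integral_neg_to_self hF ‖x‖)).fun_sub
    (hasDerivAt_integral_neg_to_self hF2 ‖x‖)).const_mul Real.pi
  have heq := (hleft.congr_of_eventuallyEq
    ((lt_mem_nhds hpos).mono fun r hr => (hball r hr).symm)).unique hright
  rw [hm]
  simp only [Nat.cast_ofNat, neg_sq] at heq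
  have hsolve : 2 * ‖x‖ * m ‖x‖ = ∫ t in -‖x‖..‖x‖, F t := by
    have hne : 2 * Real.pi * ‖x‖ ≠ 0 := by positivity
    apply mul_left_cancel₀ hne
    linear_combination heq
  rw [← hsolve]
  field_simp

end SphericalMean

section PositiveDefiniteness

lemma integral_mul_mul_integral_nonneg {X Θ : Type*} [MeasurableSpace X] [MeasurableSpace Θ]
    {μ : Measure X} {ν : Measure Θ} [SFinite μ] [SFinite ν] {g : Θ → X → ℝ}
    (hint : Integrable (fun w : (X × X) × Θ => g w.2 w.1.1 * g w.2 w.1.2) ((μ.prod μ).prod ν)) :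
    0 ≤ ∫ z : X × X, ∫ θ, g θ z.1 * g θ z.2 ∂ν ∂μ.prod μ := by
  rw [integral_integral_swap hint]
  refine integral_nonneg fun θ => ?_
  rw [integral_prod_mul (g θ) (g θ)]
  exact mul_self_nonneg _

/-- The profile `(1 - |t|)₊² / 2`. The kernel `tentProfile (s - t)` is positive definite because it
is the measure of the set of short intervals that contain both `s` and `t`. -/
def tentProfile (t : ℝ) : ℝ := max (1 - |t|) 0 ^ 2 / 2

lemma continuous_tentProfile : Continuous tentProfile := by
  unfold tentProfile
  fun_prop

lemma tentProfile_nonneg (t : ℝ) : 0 ≤ tentProfile t := by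
  unfold tentProfile
  positivity

lemma norm_tentProfile_le_one (t : ℝ) : ‖tentProfile t‖ ≤ 1 := by
  have h : max (1 - |t|) 0 ^ 2 ≤ 1 :=
    pow_le_one₀ (le_max_right _ _) (max_le (by linarith [abs_nonneg t]) zero_le_one)
  rw [Real.norm_of_nonneg (tentProfile_nonneg t), tentProfile]
  linarith

/-- The intervals of length less than one around `s`, parametrized by their endpoints. -/
def shortIntervalsAround (s : ℝ) : Set (ℝ × ℝ) := {q | q.1 < s ∧ s < q.2 ∧ q.2 < q.1 + 1}

lemma measurableSet_setOf_mem_shortIntervalsAround :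
    MeasurableSet {w : ℝ × (ℝ × ℝ) | w.2 ∈ shortIntervalsAround w.1} :=
  (measurableSet_lt (measurable_fst.comp measurable_snd) measurable_fst).inter
    ((measurableSet_lt measurable_fst (measurable_snd.comp measurable_snd)).inter
      (measurableSet_lt (measurable_snd.comp measurable_snd)
        ((measurable_fst.comp measurable_snd).add_const 1)))

lemma shortIntervalsAround_inter (s t : ℝ) : shortIntervalsAround s ∩ shortIntervalsAround t =
    regionBetween (fun _ => max s t) (fun u => u + 1) (Ioo (max s t - 1) (min s t)) := by
  ext ⟨u, v⟩
  simp only [shortIntervalsAround, regionBetween, mem_inter_iff, mem_ofPred_eq, mem_Ioo,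
    lt_min_iff, max_lt_iff]
  constructor
  · rintro ⟨⟨hus, hsv, hvu⟩, hut, htv, -⟩
    exact ⟨⟨by linarith [max_lt hsv htv], hus, hut⟩, ⟨hsv, htv⟩, hvu⟩
  · rintro ⟨⟨-, hus, hut⟩, ⟨hsv, htv⟩, hvu⟩
    exact ⟨⟨hus, hsv, hvu⟩, hut, htv, hvu⟩

lemma volume_shortIntervalsAround_inter (s t : ℝ) :
    volume (shortIntervalsAround s ∩ shortIntervalsAround t) =
      ENNReal.ofReal (tentProfile (s - t)) := by
  have hst : max s t - min s t = |s - t| := max_sub_min_eq_abs' s t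
  rw [shortIntervalsAround_inter, Measure.volume_eq_prod, volume_regionBetween_eq_integral
    (integrableOn_const (by simp)) ((Continuous.integrableOn_Icc (by fun_prop)).mono_set
      Ioo_subset_Icc_self) measurableSet_Ioo fun u hu => by linarith [hu.1]]
  congr 1
  simp only [Pi.sub_apply, tentProfile]
  rcases le_total (max s t - 1) (min s t) with h | h
  · rw [← integral_Ioc_eq_integral_Ioo, ← intervalIntegral.integral_of_le h,
      intervalIntegral.integral_sub (by simp) (by simp),
      intervalIntegral.integral_add (by simp) (by simp),
      max_eq_left (show 0 ≤ 1 - |s - t| by linarith), ← hst]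
    simp only [integral_id, intervalIntegral.integral_const, smul_eq_mul]
    ring
  · rw [Ioo_eq_empty (by linarith), Measure.restrict_empty, integral_zero_measure,
      max_eq_right (show 1 - |s - t| ≤ 0 by linarith)]
    norm_num

lemma integral_indicator_shortIntervalsAround (s t : ℝ) :
    ∫ q, 𝟙[shortIntervalsAround s ∩ shortIntervalsAround t] q = tentProfile (s - t) := by
  have hmeas : ∀ s, MeasurableSet (shortIntervalsAround s) := fun s =>
    measurableSet_setOf_mem_shortIntervalsAround.preimage measurable_prodMk_left
  rw [integral_indicator_const (1 : ℝ) ((hmeas s).inter (hmeas t)), measureReal_def,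
    volume_shortIntervalsAround_inter, ENNReal.toReal_ofReal (tentProfile_nonneg _), smul_eq_mul,
    mul_one]

section

variable {X : Type*} [MeasurableSpace X] {μ : Measure X} {f c : X → ℝ}

lemma integrable_mul_indicator_shortIntervalsAround (hf : Integrable f μ) (hc : Measurable c) :
    Integrable (fun w : (X × X) × (ℝ × ℝ) => f w.1.1 * f w.1.2 *
      𝟙[shortIntervalsAround (c w.1.1) ∩ shortIntervalsAround (c w.1.2)] w.2)
      ((μ.prod μ).prod volume) := by
  have hff := hf.mul_prod hf
  have hT : MeasurableSet {w : (X × X) × (ℝ × ℝ) |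
      w.2 ∈ shortIntervalsAround (c w.1.1) ∩ shortIntervalsAround (c w.1.2)} :=
    (measurableSet_setOf_mem_shortIntervalsAround.preimage
      (by fun_prop : Measurable fun w : (X × X) × (ℝ × ℝ) => (c w.1.1, w.2))).inter
    (measurableSet_setOf_mem_shortIntervalsAround.preimage
      (by fun_prop : Measurable fun w : (X × X) × (ℝ × ℝ) => (c w.1.2, w.2)))
  have hTm : Measurable fun w : (X × X) × (ℝ × ℝ) =>
      𝟙[shortIntervalsAround (c w.1.1) ∩ shortIntervalsAround (c w.1.2)] w.2 :=
    (measurable_const (a := (1 : ℝ))).indicator hT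
  have hsec : ∀ z : X × X, Integrable fun q => f z.1 * f z.2 *
      𝟙[shortIntervalsAround (c z.1) ∩ shortIntervalsAround (c z.2)] q := fun z => by
    refine ((integrableOn_const (C := (1 : ℝ)) ?_).integrable_indicator ?_).const_mul _
    · rw [volume_shortIntervalsAround_inter]
      exact ENNReal.ofReal_ne_top
    · exact hT.preimage measurable_prodMk_left
  refine (integrable_prod_iff (hff.aestronglyMeasurable.comp_fst.mul
    hTm.aestronglyMeasurable)).2 ⟨.of_forall hsec, ?_⟩
  have hnorm : ∀ z : X × X, ∫ q, ‖f z.1 * f z.2 *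
      𝟙[shortIntervalsAround (c z.1) ∩ shortIntervalsAround (c z.2)] q‖ =
      ‖f z.1 * f z.2‖ * tentProfile (c z.1 - c z.2) := fun z => by
    simp only [norm_mul, norm_indicator_eq_indicator_norm, norm_one, integral_const_mul,
      integral_indicator_shortIntervalsAround]
  have hprofile : Measurable fun z : X × X => tentProfile (c z.1 - c z.2) :=
    continuous_tentProfile.measurable.comp (by fun_prop)
  exact (hff.norm.mul_bdd hprofile.aestronglyMeasurable
    (.of_forall fun _ => norm_tentProfile_le_one _)).congr (.of_forall fun z => (hnorm z).symm)

lemma integral_mul_tentProfile_sub_nonneg [SFinite μ] (hf : Integrable f μ) (hc : Measurable c) :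
    0 ≤ ∫ z : X × X, f z.1 * f z.2 * tentProfile (c z.1 - c z.2) ∂μ.prod μ := by
  set g : ℝ × ℝ → X → ℝ := fun q x => f x * 𝟙[shortIntervalsAround (c x)] q with hg
  have hmul : ∀ q (z : X × X), g q z.1 * g q z.2 = f z.1 * f z.2 *
      𝟙[shortIntervalsAround (c z.1) ∩ shortIntervalsAround (c z.2)] q := fun q z => by
    simp only [hg]
    rw [mul_mul_mul_comm, ← inter_indicator_mul, mul_one]
  have h := integral_mul_mul_integral_nonneg (μ := μ) (ν := volume) (g := g)
    (by simpa only [hmul] using integrable_mul_indicator_shortIntervalsAround hf hc)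
  simpa only [hmul, integral_const_mul, integral_indicator_shortIntervalsAround] using h

end

lemma hasDerivAt_max_zero_pow_three (u : ℝ) :
    HasDerivAt (fun u : ℝ => max u 0 ^ 3) (3 * max u 0 ^ 2) u := by
  have heq : ∀ u : ℝ, max u 0 ^ 3 = (u ^ 3 + |u| ^ (3 : ℝ)) / 2 := fun u => by
    rw [show (3 : ℝ) = (3 : ℕ) by norm_num, Real.rpow_natCast, max_def]
    split_ifs with h
    · rw [abs_of_nonpos h]
      ring
    · rw [abs_of_pos (not_le.1 h)]
      ring
  simp only [heq]
  refine (((hasDerivAt_pow 3 u).fun_add (hasDerivAt_abs_rpow u (by norm_num))).div_const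
    2).congr_deriv ?_
  rw [show (3 : ℝ) - 2 = 1 by norm_num, Real.rpow_one]
  rcases le_total 0 u with h | h
  · rw [abs_of_nonneg h, max_eq_left h]
    ring
  · rw [abs_of_nonpos h, max_eq_right h]
    ring

lemma integral_tentProfile_mul {q : ℝ} (hq : 0 < q) {r : ℝ} (hr : 0 ≤ r) :
    ∫ t in -r..r, tentProfile (q * t) = (1 - max (1 - q * r) 0 ^ 3) / (3 * q) := by
  have hcont : Continuous fun t => tentProfile (q * t) :=
    continuous_tentProfile.comp (continuous_const_mul q)
  have hderiv : ∀ t ∈ uIcc 0 r,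
      HasDerivAt (fun t => -(max (1 - q * t) 0 ^ 3) / (6 * q)) (tentProfile (q * t)) t := by
    intro t ht
    rw [uIcc_of_le hr] at ht
    have hlin : HasDerivAt (fun t => 1 - q * t) (-q) t := by
      simpa using ((hasDerivAt_id t).const_mul q).const_sub 1
    refine (((hasDerivAt_max_zero_pow_three (1 - q * t)).comp t hlin).neg.div_const
      (6 * q)).congr_deriv ?_
    rw [tentProfile, abs_of_nonneg (mul_nonneg hq.le ht.1)]
    field_simp
    ring
  have hneg : ∫ t in -r..0, tentProfile (q * t) = ∫ t in 0..r, tentProfile (q * t) := by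
    rw [← neg_zero, ← intervalIntegral.integral_comp_neg]
    simp only [tentProfile, mul_neg, abs_neg, neg_zero]
  rw [← intervalIntegral.integral_add_adjacent_intervals (hcont.intervalIntegrable _ 0)
    (hcont.intervalIntegrable _ _), hneg,
    intervalIntegral.integral_eq_sub_of_hasDerivAt hderiv (hcont.intervalIntegrable _ _)]
  simp only [mul_zero, sub_zero, max_eq_left zero_le_one, one_pow]
  field_simp
  ring

lemma integral_unitary_tentProfile (μ : Measure (unitary (E3 →L[ℝ] E3))) [IsProbabilityMeasure μ]
    [μ.IsMulRightInvariant] {q : ℝ} (hq : 0 < q) {x : E3} (hx : x ≠ 0) :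
    ∫ U, tentProfile (q * (U : E3 →L[ℝ] E3) x 0) ∂μ =
      (1 - max (1 - q * ‖x‖) 0 ^ 3) / (6 * q * ‖x‖) := by
  rw [integral_unitary_apply_zero μ (F := fun t => tentProfile (q * t))
    (continuous_tentProfile.comp (continuous_const_mul q)) hx,
    integral_tentProfile_mul hq (norm_nonneg x)]
  have := norm_ne_zero_iff.2 hx
  field_simp
  ring

section CoulombKernel

variable {R : ℝ} {f : E3 → ℝ}

lemma ae_fst_sub_snd_ne_zero : ∀ᵐ z : E3 × E3, z.1 - z.2 ≠ 0 :=
  (quasiMeasurePreserving_sub volume volume).ae (compl_mem_ae_iff.2 (measure_singleton 0))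

lemma IsBallDensity.integral_one_sub_mul_coulomb_nonneg (hf : IsBallDensity R f) {q : ℝ}
    (hq : 0 ≤ q) : 0 ≤ ∫ z : E3 × E3,
      (1 - max (1 - q * ‖z.1 - z.2‖) 0 ^ 3) * (f z.1 * f z.2 / ‖z.1 - z.2‖) := by
  obtain ⟨μ, _, _⟩ := exists_rightInvariant_probabilityMeasure E3
  rcases hq.eq_or_lt with rfl | hq
  · simp
  have hslice : ∀ U : unitary (E3 →L[ℝ] E3), 0 ≤ ∫ z : E3 × E3,
      f z.1 * f z.2 * tentProfile (q * (U : E3 →L[ℝ] E3) (z.1 - z.2) 0) := fun U => by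
    have h := integral_mul_tentProfile_sub_nonneg hf.integrable
      (by fun_prop : Measurable fun x : E3 => q * (U : E3 →L[ℝ] E3) x 0)
    simpa only [← mul_sub, ← PiLp.sub_apply, ← map_sub, ← Measure.volume_eq_prod] using h
  have hmean : ∀ᵐ z : E3 × E3, 6 * q * ∫ U : unitary (E3 →L[ℝ] E3),
      f z.1 * f z.2 * tentProfile (q * (U : E3 →L[ℝ] E3) (z.1 - z.2) 0) ∂μ =
      (1 - max (1 - q * ‖z.1 - z.2‖) 0 ^ 3) * (f z.1 * f z.2 / ‖z.1 - z.2‖) := by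
    filter_upwards [ae_fst_sub_snd_ne_zero] with z hz
    rw [integral_const_mul, integral_unitary_tentProfile μ hq hz]
    have := norm_ne_zero_iff.2 hz
    field_simp
  have hcont : Continuous fun w : (E3 × E3) × unitary (E3 →L[ℝ] E3) =>
      tentProfile (q * (w.2 : E3 →L[ℝ] E3) (w.1.1 - w.1.2) 0) :=
    continuous_tentProfile.comp (by fun_prop)
  have hint : Integrable (fun w : (E3 × E3) × unitary (E3 →L[ℝ] E3) => f w.1.1 * f w.1.2 *
      tentProfile (q * (w.2 : E3 →L[ℝ] E3) (w.1.1 - w.1.2) 0)) (volume.prod μ) :=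
    ((hf.integrable.mul_prod hf.integrable).comp_fst μ).mul_bdd
      hcont.measurable.aestronglyMeasurable (.of_forall fun _ => norm_tentProfile_le_one _)
  rw [← integral_congr_ae hmean, integral_const_mul, integral_integral_swap hint]
  exact mul_nonneg (by positivity) (integral_nonneg hslice)

lemma IsCovariogramGauge.integral_unitary_apply {K : Set E3} {p : E3 → ℝ}
    (hp : IsCovariogramGauge K p) (μ : Measure (unitary (E3 →L[ℝ] E3))) [μ.IsMulRightInvariant]
    {e : E3} (he : ‖e‖ = 1) (x : E3) :
    ∫ U, max (1 - p ((U : E3 →L[ℝ] E3) x)) 0 ^ 3 ∂μ =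
      ∫ U, max (1 - p ((U : E3 →L[ℝ] E3) e) * ‖x‖) 0 ^ 3 ∂μ := by
  rw [integral_unitary_apply_congr μ (fun y => max (1 - p y) 0 ^ 3)
    (show ‖x‖ = ‖‖x‖ • e‖ by rw [norm_smul, he, norm_norm, mul_one])]
  simp only [_root_.map_smul, hp.map_smul _ _ (norm_nonneg x), mul_comm]

lemma abs_max_one_sub_zero_pow_three_le {t : ℝ} (ht : 0 ≤ t) : |max (1 - t) 0 ^ 3| ≤ 1 := by
  rw [abs_of_nonneg (by positivity)]
  exact pow_le_one₀ (le_max_right _ _) (max_le (by linarith) zero_le_one)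

lemma IsBallDensity.integral_radial_mul_coulomb_le (hf : IsBallDensity R f) {q : ℝ}
    (hq : 0 ≤ q) : ∫ z : E3 × E3,
      max (1 - q * ‖z.1 - z.2‖) 0 ^ 3 * (f z.1 * f z.2 / ‖z.1 - z.2‖) ≤ coulombIntegral f := by
  have hint : Integrable fun z : E3 × E3 =>
      max (1 - q * ‖z.1 - z.2‖) 0 ^ 3 * (f z.1 * f z.2 / ‖z.1 - z.2‖) :=
    hf.integrable_coulomb.bdd_mul (Continuous.aestronglyMeasurable (by fun_prop))
      (.of_forall fun _ => abs_max_one_sub_zero_pow_three_le (mul_nonneg hq (norm_nonneg _)))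
  have h := hf.integral_one_sub_mul_coulomb_nonneg hq
  simp only [sub_mul _ _ (_ / _), one_mul] at h
  rwa [integral_sub hf.integrable_coulomb hint, sub_nonneg] at h

lemma IsBallDensity.integral_integral_mul_coulomb (hf : IsBallDensity R f) {Y : Type*}
    [MeasurableSpace Y] (ν : Measure Y) [IsFiniteMeasure ν] {g : Y → E3 × E3 → ℝ}
    (hg : Measurable fun w : (E3 × E3) × Y => g w.2 w.1) (hg1 : ∀ y z, |g y z| ≤ 1) :
    Integrable (fun y => ∫ z : E3 × E3, g y z * (f z.1 * f z.2 / ‖z.1 - z.2‖)) ν ∧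
    ∫ y, ∫ z : E3 × E3, g y z * (f z.1 * f z.2 / ‖z.1 - z.2‖) ∂volume ∂ν =
      ∫ z : E3 × E3, (∫ y, g y z ∂ν) * (f z.1 * f z.2 / ‖z.1 - z.2‖) := by
  have hint : Integrable (fun w : (E3 × E3) × Y =>
      g w.2 w.1 * (f w.1.1 * f w.1.2 / ‖w.1.1 - w.1.2‖)) (volume.prod ν) :=
    (hf.integrable_coulomb.comp_fst ν).bdd_mul hg.aestronglyMeasurable
      (.of_forall fun _ => hg1 _ _)
  refine ⟨hint.integral_prod_right, ?_⟩
  simp only [← integral_mul_const]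
  exact (integral_integral_swap hint).symm

/-- The Graf–Schenker inequality for the covariogram kernel: averaging over rotations makes the
kernel radial. -/
lemma IsCovariogramGauge.exists_rotation_coulombIntegral_ge {K : Set E3} {p : E3 → ℝ}
    (hp : IsCovariogramGauge K p) (hf : IsBallDensity R f) :
    ∃ A : E3 ≃ₗᵢ[ℝ] E3, ∫ z : E3 × E3, max (1 - p (A (z.1 - z.2))) 0 ^ 3 *
      (f z.1 * f z.2 / ‖z.1 - z.2‖) ≤ coulombIntegral f := by
  obtain ⟨μ, _, _⟩ := exists_rightInvariant_probabilityMeasure E3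
  obtain ⟨e, he⟩ : ∃ e : E3, ‖e‖ = 1 := ⟨EuclideanSpace.single 0 1, by simp⟩
  have hpc := hp.continuous
  obtain ⟨hrotated, hrotated_swap⟩ := hf.integral_integral_mul_coulomb μ
    (g := fun U z => max (1 - p ((U : E3 →L[ℝ] E3) (z.1 - z.2))) 0 ^ 3)
    (Continuous.measurable (by fun_prop))
    fun _ _ => abs_max_one_sub_zero_pow_three_le (hp.nonneg _)
  obtain ⟨hradial, hradial_swap⟩ := hf.integral_integral_mul_coulomb μ
    (g := fun U z => max (1 - p ((U : E3 →L[ℝ] E3) e) * ‖z.1 - z.2‖) 0 ^ 3)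
    (Continuous.measurable (by fun_prop))
    fun _ _ => abs_max_one_sub_zero_pow_three_le (mul_nonneg (hp.nonneg _) (norm_nonneg _))
  have hmean : ∫ U, ∫ z : E3 × E3, max (1 - p ((U : E3 →L[ℝ] E3) (z.1 - z.2))) 0 ^ 3 *
      (f z.1 * f z.2 / ‖z.1 - z.2‖) ∂volume ∂μ ≤ coulombIntegral f := by
    simp only [hrotated_swap, hp.integral_unitary_apply μ he, ← hradial_swap]
    refine (integral_mono hradial (integrable_const _)
      fun U => hf.integral_radial_mul_coulomb_le (hp.nonneg _)).trans_eq ?_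
    rw [integral_const, probReal_univ, one_smul]
  obtain ⟨U, hU⟩ := exists_le_integral hrotated
  exact ⟨Unitary.linearIsometryEquiv U, hU.trans hmean⟩

end CoulombKernel

end PositiveDefiniteness

section RotationInvariance

variable (A : E3 ≃ₗᵢ[ℝ] E3) (Ω : Set E3)

lemma divg_conj {φ : E3 → E3} (hφ : Differentiable ℝ φ) (x : E3) :
    divg (fun y => A (φ (A.symm y))) (A x) = divg φ x := by
  have hφx : HasFDerivAt φ (fderiv ℝ φ x) (A.symm (A x)) := by
    rw [A.symm_apply_apply]
    exact (hφ x).hasFDerivAt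
  have hconj : HasFDerivAt (fun y => A (φ (A.symm y)))
      ((A : E3 →L[ℝ] E3) ∘L fderiv ℝ φ x ∘L (A.symm : E3 →L[ℝ] E3)) (A x) :=
    (A : E3 →L[ℝ] E3).hasFDerivAt.comp (A x) (hφx.comp (A x) (A.symm : E3 →L[ℝ] E3).hasFDerivAt)
  rw [divg, hconj.fderiv]
  exact LinearMap.trace_conj' (fderiv ℝ φ x : E3 →ₗ[ℝ] E3) A.toLinearEquiv

lemma perCand_preimage_subset : perCand (A ⁻¹' Ω) ⊆ perCand Ω := by
  rintro _ ⟨φ, hφ, hφc, hφ1, rfl⟩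
  refine ⟨fun y => A (φ (A.symm y)), A.contDiff.comp (hφ.comp A.symm.contDiff),
    (hφc.comp_homeomorph A.symm.toHomeomorph).comp_left (g := A) (map_zero A),
    fun x => (A.norm_map _).trans_le (hφ1 _), ?_⟩
  simp only [← divg_conj A (hφ.differentiable one_ne_zero)]
  exact A.measurePreserving.setIntegral_preimage_emb A.toHomeomorph.measurableEmbedding _ Ω

lemma perCand_preimage : perCand (A ⁻¹' Ω) = perCand Ω := by
  refine (perCand_preimage_subset A Ω).antisymm ?_
  simpa [← preimage_comp] using perCand_preimage_subset A.symm (A ⁻¹' Ω)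

lemma integral_prodMap_linearIsometryEquiv (g : E3 × E3 → ℝ) :
    ∫ z : E3 × E3, g (A z.1, A z.2) = ∫ z, g z :=
  (A.measurePreserving.prod A.measurePreserving).integral_comp
    (A.toHomeomorph.prodCongr A.toHomeomorph).measurableEmbedding g

lemma coulombIntegral_comp (f : E3 → ℝ) : coulombIntegral (f ∘ A) = coulombIntegral f := by
  rw [coulombIntegral, coulombIntegral,
    ← integral_prodMap_linearIsometryEquiv A fun z => f z.1 * f z.2 / ‖z.1 - z.2‖]
  simp only [Function.comp_apply, ← map_sub, A.norm_map]

lemma netCharge_ball_preimage (R ρ : ℝ) :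
    netCharge (ball 0 R) ρ (A ⁻¹' Ω) = netCharge (ball 0 R) ρ Ω ∘ A := by
  nth_rw 1 [← map_zero A.symm, ← A.preimage_ball]
  rfl

lemma IsCovariogramGauge.exists_rotated_set {K : Set E3} {p : E3 → ℝ}
    (hp : IsCovariogramGauge K p) {R ρ : ℝ} (hρ0 : 0 ≤ ρ) (hρ1 : ρ ≤ 1)
    (hΩ : MeasurableSet Ω) (hΩR : Ω ⊆ ball 0 R) (hper : HasFinPer Ω) :
    ∃ Ω' : Set E3, MeasurableSet Ω' ∧ Ω' ⊆ ball 0 R ∧ HasFinPer Ω' ∧ vol Ω' = vol Ω ∧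
      ldEnergy (ball 0 R) ρ Ω' = ldEnergy (ball 0 R) ρ Ω ∧
      ∫ z : E3 × E3, max (1 - p (z.1 - z.2)) 0 ^ 3 *
        (netCharge (ball 0 R) ρ Ω' z.1 * netCharge (ball 0 R) ρ Ω' z.2 / ‖z.1 - z.2‖) ≤
        coulombIntegral (netCharge (ball 0 R) ρ Ω') := by
  have hf := isBallDensity_netCharge measurableSet_ball hΩ hΩR Subset.rfl hρ0 hρ1
  obtain ⟨A, hA⟩ := hp.exists_rotation_coulombIntegral_ge hf
  have hΩ' : MeasurableSet (A.symm ⁻¹' Ω) := A.symm.continuous.measurable hΩ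
  have hΩR' : A.symm ⁻¹' Ω ⊆ ball 0 R := by
    rw [← map_zero A, ← A.symm_symm, ← A.symm.preimage_ball]
    exact preimage_mono hΩR
  have hf' := isBallDensity_netCharge measurableSet_ball hΩ' hΩR' Subset.rfl hρ0 hρ1
  have hcoulomb : coulombIntegral (netCharge (ball 0 R) ρ (A.symm ⁻¹' Ω)) =
      coulombIntegral (netCharge (ball 0 R) ρ Ω) := by
    rw [netCharge_ball_preimage, coulombIntegral_comp]
  refine ⟨A.symm ⁻¹' Ω, hΩ', hΩR', ?_, ?_, ?_, ?_⟩
  · rwa [HasFinPer, perCand_preimage]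
  · rw [vol, A.symm.measurePreserving.measure_preimage hΩ.nullMeasurableSet, vol]
  · rw [ldEnergy_eq hf, ldEnergy_eq hf', hcoulomb, per, perCand_preimage, per]
  · rw [hcoulomb, netCharge_ball_preimage, ← integral_prodMap_linearIsometryEquiv A]
    simpa only [Function.comp_apply, A.symm_apply_apply, ← map_sub, A.norm_map] using hA

end RotationInvariance

section Localization

instance : (volume : Measure (E3 × E3)).IsAddHaarMeasure :=
  inferInstanceAs (Measure.IsAddHaarMeasure ((volume : Measure E3).prod volume))

lemma abs_indicator_one_le_one {α : Type*} (S : Set α) (x : α) : |𝟙[S] x| ≤ 1 :=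
  (norm_indicator_le_norm_self (fun _ => (1 : ℝ)) x).trans_eq norm_one

lemma continuous_integral_indicator_sub_mul {E : Type*} [NormedAddCommGroup E] [NormedSpace ℝ E]
    [FiniteDimensional ℝ E] [MeasurableSpace E] [BorelSpace E] {μ ν : Measure E}
    [μ.IsAddHaarMeasure] {K : Set E} (hK : MeasurableSet K) (hKc : Convex ℝ K) (hν : ν ≪ μ)
    {g : E → ℝ} (hg : Integrable g ν) : Continuous fun τ => ∫ x, 𝟙[K] (x - τ) * g x ∂ν := by
  rw [continuous_iff_continuousAt]
  intro τ
  refine continuousAt_of_dominated (bound := fun x => ‖g x‖) (.of_forall fun s => ?_)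
    (.of_forall fun s => .of_forall fun x => ?_) hg.norm ?_
  · exact ((measurable_const.indicator hK).comp
      (measurable_id.sub_const s)).aestronglyMeasurable.mul hg.1
  · rw [norm_mul]
    exact mul_le_of_le_one_left (norm_nonneg _) (abs_indicator_one_le_one _ _)
  · have hfrontier : ∀ᵐ x ∂μ, x - τ ∉ frontier K :=
      (measurePreserving_sub_right μ τ).quasiMeasurePreserving.ae
        (compl_mem_ae_iff.2 (hKc.addHaar_frontier μ))
    filter_upwards [hν hfrontier] with x hx
    exact ((continuousOn_const.continuousAt_indicator hx).comp (f := fun s => x - s)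
      (by fun_prop)).mul continuousAt_const

lemma exists_disjoint_measurable_partition {X ι : Type*} [TopologicalSpace X]
    [MeasurableSpace X] [OpensMeasurableSpace X] {T : Set X} (hT : IsCompact T)
    (hTm : MeasurableSet T) {U : ι → Set X} (hU : ∀ i, IsOpen (U i)) (hTU : T ⊆ ⋃ i, U i) :
    ∃ (n : ℕ) (s : Fin n → ι) (A : Fin n → Set X), (∀ k, MeasurableSet (A k)) ∧
      Pairwise (Function.onFun Disjoint A) ∧ (⋃ k, A k) = T ∧ ∀ k, A k ⊆ U (s k) := by
  obtain ⟨t, ht⟩ := hT.elim_finite_subcover U hU hTU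
  let s : Fin t.card → ι := fun k => t.equivFin.symm k
  have hUT : ∀ k, MeasurableSet (U (s k) ∩ T) := fun k => (hU _).measurableSet.inter hTm
  refine ⟨t.card, s, disjointed fun k => U (s k) ∩ T,
    fun k => disjointedRec (fun _ _ h => MeasurableSet.diff h (hUT _)) (hUT k),
    disjoint_disjointed _, ?_, fun k => (disjointed_subset _ k).trans inter_subset_left⟩
  rw [iUnion_disjointed]
  refine (iUnion_subset fun k => inter_subset_right).antisymm fun x hx => ?_
  obtain ⟨i, hi, hxi⟩ := mem_iUnion₂.1 (ht hx)
  refine mem_iUnion.2 ⟨t.equivFin ⟨i, hi⟩, ?_, hx⟩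
  simpa [s] using hxi

/-- The Coulomb self-interaction of the part of the charge density `f` inside the translate
`τ + K`. -/
def localCoulomb (K : Set E3) (f : E3 → ℝ) (τ : E3) : ℝ :=
  ∫ z : E3 × E3, 𝟙[K ×ˢ K] (z - (τ, τ)) * (f z.1 * f z.2 / ‖z.1 - z.2‖)

/-- The grand-canonical energy without its perimeter term of the part inside the translate `τ + K`
of a droplet configuration `Ω` with charge density `f`. -/
def localEnergy (K Ω : Set E3) (f : E3 → ℝ) (τ : E3) : ℝ :=
  1 / 2 * localCoulomb K f τ - muStar * ∫ x in Ω, 𝟙[K] (x - τ)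

/-- A lower bound for the energy without perimeter of configurations inside the ball of
radius `d`. -/
def energyFloor (d : ℝ) : ℝ :=
  -(1 / 2 * coulombIntegral 𝟙[ball (0 : E3) d] + |muStar| * vol (ball (0 : E3) d))

variable {K Ω Λ S : Set E3} {f : E3 → ℝ} {d R ρ : ℝ} {τ : E3}

lemma IsBallDensity.energyFloor_le (hf : IsBallDensity d f) (hS : S ⊆ ball 0 d) :
    energyFloor d ≤ 1 / 2 * coulombIntegral f - muStar * vol S := by
  have hcoulomb := (abs_le.1 hf.abs_coulombIntegral_le).1
  have hmass : muStar * vol S ≤ |muStar| * vol (ball (0 : E3) d) :=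
    mul_le_mul (le_abs_self _) (measureReal_mono hS measure_ball_lt_top.ne)
      ENNReal.toReal_nonneg (abs_nonneg _)
  unfold energyFloor
  linarith

lemma FF_le (hK : MeasurableSet K) (hKd : K ⊆ ball 0 d) (hρ0 : 0 ≤ ρ) (hρ1 : ρ ≤ 1)
    (hΩ : MeasurableSet Ω) (hΩK : Ω ⊆ K) (hper : HasFinPer Ω) :
    FF K ρ ≤ ldEnergy K ρ Ω - muStar * vol Ω := by
  refine csInf_le ⟨energyFloor d, ?_⟩ ⟨Ω, hΩ, hΩK, hper, rfl⟩
  rintro _ ⟨Ω, hΩ, hΩK, hper, rfl⟩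
  have hf := isBallDensity_netCharge hK hΩ hΩK hKd hρ0 hρ1
  rw [ldEnergy_eq hf]
  linarith [hf.energyFloor_le (hΩK.trans hKd), hper.per_nonneg]

lemma setIntegral_inter_preimage_add (hK : MeasurableSet K) (hΩ : MeasurableSet Ω) (τ : E3)
    (g : E3 → ℝ) :
    ∫ u in K ∩ (· + τ) ⁻¹' Ω, g u = ∫ x in Ω, 𝟙[K] (x - τ) * g (x - τ) := by
  rw [← integral_indicator (hK.inter (measurable_add_const τ hΩ)), ← integral_indicator hΩ,
    ← integral_sub_right_eq_self _ τ]
  congr 1 with x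
  by_cases hx : x ∈ Ω <;> by_cases hxK : x - τ ∈ K <;> simp [hx, hxK]

lemma vol_inter_preimage_add (hK : MeasurableSet K) (hΩ : MeasurableSet Ω) (τ : E3) :
    vol (K ∩ (· + τ) ⁻¹' Ω) = ∫ x in Ω, 𝟙[K] (x - τ) := by
  simpa [vol, Measure.real] using setIntegral_inter_preimage_add hK hΩ τ fun _ => 1

lemma netCharge_inter_preimage_add (h : ∀ u ∈ K, u + τ ∈ Λ) :
    netCharge K ρ (K ∩ (· + τ) ⁻¹' Ω) = fun u => 𝟙[K] u * netCharge Λ ρ Ω (u + τ) := by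
  ext u
  by_cases hu : u ∈ K
  · by_cases huΩ : u + τ ∈ Ω <;> simp [netCharge, hu, h u hu, huΩ]
  · simp [netCharge, hu]

lemma localCoulomb_eq (K : Set E3) (f : E3 → ℝ) (τ : E3) :
    localCoulomb K f τ = coulombIntegral fun u => 𝟙[K] u * f (u + τ) := by
  rw [localCoulomb, ← integral_add_right_eq_self _ (τ, τ), coulombIntegral]
  congr 1 with z
  rw [add_sub_cancel_right, Prod.fst_add, Prod.snd_add, add_sub_add_right_eq_sub,
    show 𝟙[K ×ˢ K] z = 𝟙[K] z.1 * 𝟙[K] z.2 from indicator_prod_one]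
  ring

lemma localEnergy_eq (hK : MeasurableSet K) (hΩ : MeasurableSet Ω) (f : E3 → ℝ) (τ : E3) :
    localEnergy K Ω f τ = 1 / 2 * coulombIntegral (fun u => 𝟙[K] u * f (u + τ)) -
      muStar * vol (K ∩ (· + τ) ⁻¹' Ω) := by
  rw [localEnergy, localCoulomb_eq, vol_inter_preimage_add hK hΩ]

lemma IsBallDensity.indicator_mul_comp_add (hf : IsBallDensity R f) (hK : MeasurableSet K)
    (hKd : K ⊆ ball 0 d) (τ : E3) : IsBallDensity d fun u => 𝟙[K] u * f (u + τ) where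
  measurable := (measurable_const.indicator hK).mul (hf.measurable.comp (measurable_add_const τ))
  abs_le_indicator x := by
    by_cases hx : x ∈ K
    · simpa [hx, hKd hx] using hf.abs_le_one (x + τ)
    · simpa [hx] using indicator_nonneg (by simp) _

lemma IsBallDensity.energyFloor_le_localEnergy (hf : IsBallDensity R f) (hK : MeasurableSet K)
    (hKd : K ⊆ ball 0 d) (hΩ : MeasurableSet Ω) (τ : E3) :
    energyFloor d ≤ localEnergy K Ω f τ := by
  rw [localEnergy_eq hK hΩ]
  exact (hf.indicator_mul_comp_add hK hKd τ).energyFloor_le (inter_subset_left.trans hKd)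

lemma IsBallDensity.continuous_localCoulomb (hf : IsBallDensity R f) (hK : MeasurableSet K)
    (hKc : Convex ℝ K) : Continuous (localCoulomb K f) :=
  (continuous_integral_indicator_sub_mul (hK.prod hK) (hKc.prod hKc)
    Measure.AbsolutelyContinuous.rfl hf.integrable_coulomb).comp
    (by fun_prop : Continuous fun τ : E3 => (τ, τ))

lemma continuous_setIntegral_indicator_sub_mul (hK : MeasurableSet K) (hKc : Convex ℝ K)
    {g : E3 → ℝ} (hg : IntegrableOn g Ω) :
    Continuous fun τ => ∫ x in Ω, 𝟙[K] (x - τ) * g x :=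
  continuous_integral_indicator_sub_mul hK hKc Measure.restrict_le_self.absolutelyContinuous hg

lemma continuous_localMass (hK : MeasurableSet K) (hKc : Convex ℝ K) (hΩ : volume Ω ≠ ⊤) :
    Continuous fun τ => ∫ x in Ω, 𝟙[K] (x - τ) := by
  simpa only [mul_one] using
    continuous_setIntegral_indicator_sub_mul hK hKc (integrableOn_const (C := (1 : ℝ)) hΩ)

lemma IsBallDensity.continuous_localEnergy (hf : IsBallDensity R f) (hK : MeasurableSet K)
    (hKc : Convex ℝ K) (hΩ : volume Ω ≠ ⊤) : Continuous (localEnergy K Ω f) :=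
  ((hf.continuous_localCoulomb hK hKc).const_mul _).sub
    ((continuous_localMass hK hKc hΩ).const_mul _)

lemma IsTestField.comp_sub {φ : E3 → E3} (hφ : IsTestField φ) (τ : E3) :
    IsTestField fun x => φ (x - τ) where
  contDiff := hφ.contDiff.comp (contDiff_id.sub contDiff_const)
  hasCompactSupport := hφ.hasCompactSupport.comp_homeomorph (Homeomorph.subRight τ)
  norm_le_one _ := hφ.norm_le_one _

lemma exists_isTestField_FF_sub_lt (hK : MeasurableSet K) (hKd : K ⊆ ball 0 d) (hρ0 : 0 ≤ ρ)
    (hρ1 : ρ ≤ 1) (hΩ : MeasurableSet Ω) (hKτ : ∀ u ∈ K, u + τ ∈ Λ) {δ : ℝ} (hδ : 0 < δ) :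
    ∃ φ, IsTestField φ ∧ FF K ρ - δ <
      (∫ x in Ω, 𝟙[K] (x - τ) * divg φ x) + localEnergy K Ω (netCharge Λ ρ Ω) τ := by
  have hS : MeasurableSet (K ∩ (· + τ) ⁻¹' Ω) := hK.inter (measurable_add_const τ hΩ)
  have henergy : ldEnergy K ρ (K ∩ (· + τ) ⁻¹' Ω) - muStar * vol (K ∩ (· + τ) ⁻¹' Ω) =
      per (K ∩ (· + τ) ⁻¹' Ω) + localEnergy K Ω (netCharge Λ ρ Ω) τ := by
    rw [ldEnergy_eq (isBallDensity_netCharge hK hS inter_subset_left hKd hρ0 hρ1),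
      netCharge_inter_preimage_add hKτ, localEnergy_eq hK hΩ]
    ring
  obtain ⟨_, ⟨φ, hφ, hφc, hφ1, rfl⟩, hlt⟩ : ∃ a ∈ perCand (K ∩ (· + τ) ⁻¹' Ω),
      FF K ρ - δ - localEnergy K Ω (netCharge Λ ρ Ω) τ < a := by
    by_cases hper : HasFinPer (K ∩ (· + τ) ⁻¹' Ω)
    · refine exists_lt_of_lt_csSup ⟨0, zero_mem_perCand _⟩ ?_
      have hFF := FF_le hK hKd hρ0 hρ1 hS inter_subset_left hper
      rw [henergy, per] at hFF
      linarith
    · exact not_bddAbove_iff.1 hper _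
  have hdivg : ∀ x, divg (fun x => φ (x - τ)) x = divg φ (x - τ) := fun x => by
    rw [divg, fderiv_comp_sub, divg]
  refine ⟨_, IsTestField.comp_sub ⟨hφ, hφc, hφ1⟩ τ, ?_⟩
  rw [setIntegral_inter_preimage_add hK hΩ] at hlt
  simp only [hdivg]
  linarith

lemma add_mem_of_closedBall (hKd : K ⊆ ball 0 d) (hτ : τ ∈ closedBall (0 : E3) (R - d)) :
    ∀ u ∈ K, u + τ ∈ ball (0 : E3) R := fun u hu => by
  have hu := mem_ball_zero_iff.1 (hKd hu)
  rw [mem_closedBall_zero_iff] at hτ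
  rw [mem_ball_zero_iff]
  linarith [norm_add_le u τ]

lemma setIntegral_closedBall_eq_integral (hKd : K ⊆ ball 0 d) {x : E3} (hx : x ∈ ball 0 R)
    {g : E3 → ℝ} (hg : ∀ τ, x - τ ∉ K → g τ = 0) :
    ∫ τ in closedBall (0 : E3) (R + d), g τ = ∫ τ, g τ := by
  refine setIntegral_eq_integral_of_forall_compl_eq_zero fun τ hτ => hg τ fun h => hτ ?_
  have h := mem_ball_zero_iff.1 (hKd h)
  rw [mem_ball_zero_iff] at hx
  rw [mem_closedBall_zero_iff]
  linarith [norm_sub_le x (x - τ), congrArg norm (sub_sub_cancel x τ)]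

lemma IsCovariogramGauge.integral_indicator_prod_sub {p : E3 → ℝ} (hp : IsCovariogramGauge K p)
    (hK : MeasurableSet K) (z : E3 × E3) :
    ∫ τ, 𝟙[K ×ˢ K] (z - (τ, τ)) = vol K * max (1 - p (z.1 - z.2)) 0 ^ 3 := by
  have hmem : ∀ τ, 𝟙[K ×ˢ K] (z - (τ, τ)) = 𝟙[K ∩ {u | u - (z.1 - z.2) ∈ K}] (z.1 - τ) :=
    fun τ => indicator_eq_indicator (by
      rw [mem_prod, mem_inter_iff, mem_ofPred_eq, Prod.fst_sub, Prod.snd_sub,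
        show z.1 - τ - (z.1 - z.2) = z.2 - τ by abel]) rfl
  simp only [hmem]
  rw [integral_sub_left_eq_self (fun t => 𝟙[K ∩ {u | u - (z.1 - z.2) ∈ K}] t),
    integral_indicator_const (μ := volume) (s := K ∩ {u | u - (z.1 - z.2) ∈ K}) _
      (hK.inter (measurable_sub_const _ hK)), smul_eq_mul, mul_one]
  exact hp.measureReal_inter _

lemma IsBallDensity.setIntegral_localCoulomb (hf : IsBallDensity R f) {p : E3 → ℝ}
    (hp : IsCovariogramGauge K p) (hK : MeasurableSet K) (hKd : K ⊆ ball 0 d) :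
    ∫ τ in closedBall (0 : E3) (R + d), localCoulomb K f τ = vol K *
      ∫ z : E3 × E3, max (1 - p (z.1 - z.2)) 0 ^ 3 * (f z.1 * f z.2 / ‖z.1 - z.2‖) := by
  have _ : IsFiniteMeasure (volume.restrict (closedBall (0 : E3) (R + d))) :=
    isFiniteMeasure_restrict.2 measure_closedBall_lt_top.ne
  have hmeas : Measurable fun w : (E3 × E3) × E3 => 𝟙[K ×ˢ K] (w.1 - (w.2, w.2)) :=
    (measurable_const.indicator (hK.prod hK)).comp (by fun_prop)
  have hswap := (hf.integral_integral_mul_coulomb (g := fun τ z => 𝟙[K ×ˢ K] (z - (τ, τ)))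
    (volume.restrict (closedBall (0 : E3) (R + d))) hmeas
    fun _ _ => abs_indicator_one_le_one _ _).2
  unfold localCoulomb
  rw [hswap, ← integral_const_mul]
  congr 1 with z
  rw [← mul_assoc, ← hp.integral_indicator_prod_sub hK]
  by_cases hz : z.1 ∈ ball 0 R
  · rw [setIntegral_closedBall_eq_integral hKd hz fun τ hτ =>
      indicator_of_notMem (fun h => hτ h.1) _]
  · simp [hf.eq_zero hz]

lemma setIntegral_localMass (hK : MeasurableSet K) (hKd : K ⊆ ball 0 d) (hΩ : MeasurableSet Ω)
    (hΩR : Ω ⊆ ball 0 R) :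
    ∫ τ in closedBall (0 : E3) (R + d), ∫ x in Ω, 𝟙[K] (x - τ) = vol K * vol Ω := by
  have _ : IsFiniteMeasure (volume.restrict (closedBall (0 : E3) (R + d))) :=
    isFiniteMeasure_restrict.2 measure_closedBall_lt_top.ne
  have _ : IsFiniteMeasure (volume.restrict Ω) :=
    isFiniteMeasure_restrict.2 (measure_ball_lt_top.trans_le' (measure_mono hΩR)).ne
  have hint : Integrable (fun w : E3 × E3 => 𝟙[K] (w.2 - w.1))
      ((volume.restrict (closedBall (0 : E3) (R + d))).prod (volume.restrict Ω)) :=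
    (integrable_const (1 : ℝ)).mono' ((measurable_const.indicator hK).comp
      (by fun_prop : Measurable fun w : E3 × E3 => w.2 - w.1)).aestronglyMeasurable
      (.of_forall fun _ => abs_indicator_one_le_one _ _)
  have hmass : ∀ x ∈ Ω, ∫ τ in closedBall (0 : E3) (R + d), 𝟙[K] (x - τ) = vol K := fun x hx => by
    rw [setIntegral_closedBall_eq_integral hKd (hΩR hx) fun τ hτ => indicator_of_notMem hτ _,
      integral_sub_left_eq_self 𝟙[K], integral_indicator_const _ hK, smul_eq_mul, mul_one]
    rfl
  rw [integral_integral_swap hint, setIntegral_congr_fun hΩ hmass, setIntegral_const, smul_eq_mul,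
    mul_comm]
  rfl

lemma IsBallDensity.setIntegral_localEnergy_le (hf : IsBallDensity R f) {p : E3 → ℝ}
    (hp : IsCovariogramGauge K p) (hK : MeasurableSet K) (hKc : Convex ℝ K) (hKd : K ⊆ ball 0 d)
    (hΩ : MeasurableSet Ω) (hΩR : Ω ⊆ ball 0 R)
    (hker : ∫ z : E3 × E3, max (1 - p (z.1 - z.2)) 0 ^ 3 * (f z.1 * f z.2 / ‖z.1 - z.2‖) ≤
      coulombIntegral f) :
    ∫ τ in closedBall (0 : E3) (R + d), localEnergy K Ω f τ ≤
      vol K * (1 / 2 * coulombIntegral f - muStar * vol Ω) := by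
  have hint {g : E3 → ℝ} (hg : Continuous g) : IntegrableOn g (closedBall 0 (R + d)) :=
    hg.continuousOn.integrableOn_compact (isCompact_closedBall _ _)
  unfold localEnergy
  rw [integral_sub ((hint (hf.continuous_localCoulomb hK hKc)).const_mul _)
      ((hint (continuous_localMass hK hKc
        (measure_ball_lt_top.trans_le' (measure_mono hΩR)).ne)).const_mul _),
    integral_const_mul, integral_const_mul, hf.setIntegral_localCoulomb hp hK hKd,
    setIntegral_localMass hK hKd hΩ hΩR]
  linarith [mul_le_mul_of_nonneg_left hker (show 0 ≤ vol K from ENNReal.toReal_nonneg)]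

end Localization

section MainEstimate

variable {K Ω Λ T T₀ : Set E3} {f : E3 → ℝ} {v : ℕ → E3 → ℝ} {p : E3 → ℝ} {C d R ρ δ : ℝ}

lemma IsBallDensity.energyFloor_mul_le_setIntegral (hf : IsBallDensity R f)
    (hK : MeasurableSet K) (hKc : Convex ℝ K) (hKd : K ⊆ ball 0 d) (hΩ : MeasurableSet Ω)
    (hΩv : volume Ω ≠ ⊤) (hT : IsCompact T) (hT₀ : MeasurableSet T₀) (hT₀T : T₀ ⊆ T) :
    energyFloor d * (vol T - vol T₀) ≤ ∫ τ in T \ T₀, localEnergy K Ω f τ :=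
  calc energyFloor d * (vol T - vol T₀) = ∫ _ in T \ T₀, energyFloor d := by
        rw [setIntegral_const, measureReal_sdiff hT₀T hT₀ hT.measure_lt_top.ne, smul_eq_mul,
          mul_comm]
        rfl
    _ ≤ ∫ τ in T \ T₀, localEnergy K Ω f τ :=
        setIntegral_mono
          (integrableOn_const (measure_ne_top_of_subset sdiff_subset hT.measure_lt_top.ne))
          (((hf.continuous_localEnergy hK hKc hΩv).continuousOn.integrableOn_compact hT).mono_set
            sdiff_subset) (hf.energyFloor_le_localEnergy hK hKd hΩ)

lemma HasFinPer.FF_sub_mul_vol_le (hper : HasFinPer Ω) (hK : MeasurableSet K) (hKc : Convex ℝ K)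
    (hKd : K ⊆ ball 0 d) (hK0 : 0 < vol K) (hv : IsBVCutoffSeq K C v) (hρ0 : 0 ≤ ρ) (hρ1 : ρ ≤ 1)
    (hf : IsBallDensity R (netCharge Λ ρ Ω)) (hΩ : MeasurableSet Ω) (hΩv : volume Ω ≠ ⊤)
    (hT : IsCompact T) (hTΛ : ∀ τ ∈ T, ∀ u ∈ K, u + τ ∈ Λ) (hδ : 0 < δ) :
    (FF K ρ - δ) * vol T ≤
      vol K * per Ω + C * vol Ω + ∫ τ in T, localEnergy K Ω (netCharge Λ ρ Ω) τ := by
  have henergy := hf.continuous_localEnergy hK hKc hΩv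
  have hflux (φ : {φ : E3 → E3 // IsTestField φ}) :
      Continuous fun τ => ∫ x in Ω, 𝟙[K] (x - τ) * divg φ x :=
    continuous_setIntegral_indicator_sub_mul hK hKc
      (integrable_divg φ.2.contDiff φ.2.hasCompactSupport).integrableOn
  obtain ⟨n, φ, A, hA, hdisj, hAT, hlt⟩ := exists_disjoint_measurable_partition hT
    hT.measurableSet (fun φ => isOpen_lt (continuous_const (y := FF K ρ - δ))
      ((hflux φ).add henergy)) fun τ hτ =>
    have ⟨φ, hφ, h⟩ := exists_isTestField_FF_sub_lt hK hKd hρ0 hρ1 hΩ (hTΛ τ hτ) hδ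
    mem_iUnion.2 ⟨⟨φ, hφ⟩, h⟩
  have hAsub (i) : A i ⊆ T := hAT ▸ subset_iUnion A i
  have hint {g : E3 → ℝ} (hg : Continuous g) (i) : IntegrableOn g (A i) :=
    (hg.continuousOn.integrableOn_compact hT).mono_set (hAsub i)
  have hsum {g : E3 → ℝ} (hg : Continuous g) : ∫ τ in T, g τ = ∑ i, ∫ τ in A i, g τ := by
    rw [← hAT, integral_iUnion_fintype hA hdisj (hint hg)]
  calc (FF K ρ - δ) * vol T = ∫ _ in T, (FF K ρ - δ) := by
        rw [setIntegral_const, smul_eq_mul, mul_comm]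
        rfl
    _ = ∑ i, ∫ _ in A i, (FF K ρ - δ) := hsum continuous_const
    _ ≤ ∑ i, ∫ τ in A i, ((∫ x in Ω, 𝟙[K] (x - τ) * divg (φ i) x) +
          localEnergy K Ω (netCharge Λ ρ Ω) τ) :=
        Finset.sum_le_sum fun i _ => setIntegral_mono_on (hint continuous_const i)
          (hint ((hflux _).add henergy) i) (hA i) fun τ hτ => (hlt i hτ).le
    _ = (∑ i, ∫ τ in A i, ∫ x in Ω, 𝟙[K] (x - τ) * divg (φ i) x) +
          ∫ τ in T, localEnergy K Ω (netCharge Λ ρ Ω) τ := by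
        rw [hsum henergy, ← Finset.sum_add_distrib]
        exact Finset.sum_congr rfl fun i _ => integral_add (hint (hflux _) i) (hint henergy i)
    _ ≤ _ := by
        gcongr
        exact hper.sum_setIntegral_localized_divg_le hΩv hK
          (measure_ne_top_of_subset hKd measure_ball_lt_top.ne) hK0 hv (fun i => (φ i).2) hA
          (fun i => measure_ne_top_of_subset (hAsub i) hT.measure_lt_top.ne) hdisj

lemma HasFinPer.FF_mul_vol_le (hper : HasFinPer Ω) (hK : MeasurableSet K) (hKc : Convex ℝ K)
    (hKd : K ⊆ ball 0 d) (hK0 : 0 < vol K) (hv : IsBVCutoffSeq K C v) (hρ0 : 0 ≤ ρ) (hρ1 : ρ ≤ 1)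
    (hf : IsBallDensity R (netCharge Λ ρ Ω)) (hΩ : MeasurableSet Ω) (hΩv : volume Ω ≠ ⊤)
    (hT : IsCompact T) (hTΛ : ∀ τ ∈ T, ∀ u ∈ K, u + τ ∈ Λ) :
    FF K ρ * vol T ≤
      vol K * per Ω + C * vol Ω + ∫ τ in T, localEnergy K Ω (netCharge Λ ρ Ω) τ := by
  have hlim : Tendsto (fun δ => (FF K ρ - δ) * vol T) (𝓝[>] 0) (𝓝 ((FF K ρ - 0) * vol T)) :=
    Continuous.tendsto' (by fun_prop) _ _ rfl |>.mono_left nhdsWithin_le_nhds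
  rw [sub_zero] at hlim
  exact le_of_tendsto hlim (eventually_mem_nhdsWithin.mono fun δ hδ =>
    hper.FF_sub_mul_vol_le hK hKc hKd hK0 hv hρ0 hρ1 hf hΩ hΩv hT hTΛ hδ)

lemma IsCovariogramGauge.FF_mul_vol_add_le (hp : IsCovariogramGauge K p) (hK : MeasurableSet K)
    (hKc : Convex ℝ K) (hKd : K ⊆ ball 0 d) (hd : 0 ≤ d) (hK0 : 0 < vol K)
    (hv : IsBVCutoffSeq K C v) (hρ0 : 0 ≤ ρ) (hρ1 : ρ ≤ 1) (hΩ : MeasurableSet Ω)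
    (hΩR : Ω ⊆ ball 0 R) (hper : HasFinPer Ω)
    (hker : ∫ z : E3 × E3, max (1 - p (z.1 - z.2)) 0 ^ 3 * (netCharge (ball 0 R) ρ Ω z.1 *
      netCharge (ball 0 R) ρ Ω z.2 / ‖z.1 - z.2‖) ≤ coulombIntegral (netCharge (ball 0 R) ρ Ω)) :
    FF K ρ * vol (closedBall (0 : E3) (R - d)) + energyFloor d *
        (vol (closedBall (0 : E3) (R + d)) - vol (closedBall (0 : E3) (R - d))) ≤
      vol K * (ldEnergy (ball 0 R) ρ Ω - muStar * vol Ω) + C * vol Ω := by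
  have hf := isBallDensity_netCharge measurableSet_ball hΩ hΩR Subset.rfl hρ0 hρ1
  have hΩv : volume Ω ≠ ⊤ := measure_ne_top_of_subset hΩR measure_ball_lt_top.ne
  have hsub : closedBall (0 : E3) (R - d) ⊆ closedBall 0 (R + d) :=
    closedBall_subset_closedBall (by linarith)
  have hinner := hper.FF_mul_vol_le hK hKc hKd hK0 hv hρ0 hρ1 hf hΩ hΩv
    (isCompact_closedBall 0 (R - d)) fun τ hτ => add_mem_of_closedBall hKd hτ
  have houter := hf.energyFloor_mul_le_setIntegral hK hKc hKd hΩ hΩv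
    (isCompact_closedBall 0 (R + d)) measurableSet_closedBall hsub
  have htotal := hf.setIntegral_localEnergy_le hp hK hKc hKd hΩ hΩR hker
  rw [setIntegral_sdiff measurableSet_closedBall ((hf.continuous_localEnergy hK hKc
    hΩv).continuousOn.integrableOn_compact (isCompact_closedBall _ _)) hsub] at houter
  rw [ldEnergy_eq hf]
  linarith

end MainEstimate

section Ball

variable {R r ρ : ℝ}

lemma vol_ball (hr : 0 ≤ r) : vol (ball (0 : E3) r) = r ^ 3 * (Real.pi * 4 / 3) := by
  rw [vol, EuclideanSpace.volume_ball_fin_three, ENNReal.toReal_mul, ENNReal.toReal_pow,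
    ENNReal.toReal_ofReal hr, ENNReal.toReal_ofReal (by positivity)]

lemma vol_closedBall (hr : 0 ≤ r) (hR : 0 < R) :
    vol (closedBall (0 : E3) r) = (r / R) ^ 3 * vol (ball (0 : E3) R) := by
  have h : vol (closedBall (0 : E3) r) = vol (ball (0 : E3) r) :=
    congrArg ENNReal.toReal (Measure.addHaar_closedBall_eq_addHaar_ball _ _ _)
  rw [h, vol_ball hr, vol_ball hR.le]
  field_simp

lemma abs_sqrt_sub_sqrt_le {s t : ℝ} (hs : 1 / 4 ≤ s) (ht : 1 / 4 ≤ t) : |√s - √t| ≤ |s - t| := by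
  have hs' : 1 / 2 ≤ √s := Real.le_sqrt_of_sq_le (by linarith)
  have ht' : 1 / 2 ≤ √t := Real.le_sqrt_of_sq_le (by linarith)
  have hfactor : s - t = (√s + √t) * (√s - √t) := by
    linear_combination Real.mul_self_sqrt (show 0 ≤ t by linarith) -
      Real.mul_self_sqrt (show 0 ≤ s by linarith)
  rw [hfactor, abs_mul, abs_of_nonneg (by positivity : 0 ≤ √s + √t)]
  exact le_mul_of_one_le_left (abs_nonneg _) (by linarith)

lemma abs_sq_sub_sq_le {a b : ℝ} (ha : |a| ≤ 1 / 2) (hb : |b| ≤ 1 / 2) :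
    |a ^ 2 - b ^ 2| ≤ |a - b| := by
  rw [sq_sub_sq, abs_mul]
  exact mul_le_of_le_one_left (abs_nonneg _) (by linarith [abs_add_le a b])

lemma lipschitzOnWith_neg_sqrt (hR : 1 ≤ R) :
    LipschitzOnWith 2 (fun q : ℝ × ℝ => -√(R ^ 2 - q.1 ^ 2 - q.2 ^ 2)) (closedBall 0 (1 / 2)) := by
  have hcoord {q : ℝ × ℝ} (hq : q ∈ closedBall 0 (1 / 2)) : |q.1| ≤ 1 / 2 ∧ |q.2| ≤ 1 / 2 :=
    norm_prod_le_iff.1 (mem_closedBall_zero_iff.1 hq)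
  have hlow {q : ℝ × ℝ} (hq : q ∈ closedBall 0 (1 / 2)) :
      1 / 4 ≤ R ^ 2 - q.1 ^ 2 - q.2 ^ 2 := by
    have h₁ := pow_le_pow_left₀ (abs_nonneg _) (hcoord hq).1 2
    have h₂ := pow_le_pow_left₀ (abs_nonneg _) (hcoord hq).2 2
    rw [sq_abs] at h₁ h₂
    linarith [one_le_pow₀ hR (n := 2)]
  refine LipschitzOnWith.of_dist_le_mul fun q hq s hs => ?_
  calc dist (-√(R ^ 2 - q.1 ^ 2 - q.2 ^ 2)) (-√(R ^ 2 - s.1 ^ 2 - s.2 ^ 2))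
      ≤ |(R ^ 2 - q.1 ^ 2 - q.2 ^ 2) - (R ^ 2 - s.1 ^ 2 - s.2 ^ 2)| := by
        rw [dist_neg_neg, Real.dist_eq]
        exact abs_sqrt_sub_sqrt_le (hlow hq) (hlow hs)
    _ = |(q.1 ^ 2 - s.1 ^ 2) + (q.2 ^ 2 - s.2 ^ 2)| := by
        rw [← abs_neg]
        ring_nf
    _ ≤ |q.1 ^ 2 - s.1 ^ 2| + |q.2 ^ 2 - s.2 ^ 2| := abs_add_le _ _
    _ ≤ |q.1 - s.1| + |q.2 - s.2| :=
        add_le_add (abs_sq_sub_sq_le (hcoord hq).1 (hcoord hs).1)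
          (abs_sq_sub_sq_le (hcoord hq).2 (hcoord hs).2)
    _ ≤ dist q s + dist q s := add_le_add (le_max_left _ _) (le_max_right _ _)
    _ = (2 : ℝ≥0) * dist q s := (two_mul _).symm

lemma isLipschitzDomain_ball (hR : 1 ≤ R) : IsLipschitzDomain (1 / 2) 2 (ball (0 : E3) R) := by
  intro x hx
  rw [frontier_ball (0 : E3) (by linarith), mem_sphere_zero_iff_norm] at hx
  let south : E3 := EuclideanSpace.single 2 (-R)
  obtain ⟨g, hg⟩ : ∃ g : E3 ≃ₗᵢ[ℝ] E3, g x = south :=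
    ⟨_, Submodule.reflection_sub (by simp [south, hx, abs_of_nonneg (by linarith : 0 ≤ R)])⟩
  obtain ⟨f, hf, hfeq⟩ := (lipschitzOnWith_neg_sqrt hR).extend_real
  refine ⟨g.toIsometryEquiv, f, by simpa using hf, ?_⟩
  rw [inter_comm]
  refine Set.ext fun y => and_congr_right fun hy => ?_
  have hclose (i) : |(g y - south) i| < 1 / 2 := by
    refine (PiLp.norm_apply_le (g y - south) i).trans_lt ?_
    rwa [← hg, ← map_sub, g.norm_map, ← dist_eq_norm]
  have h₀ : |g y 0| < 1 / 2 := by simpa [south] using hclose 0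
  have h₁ : |g y 1| < 1 / 2 := by simpa [south] using hclose 1
  have h₂ : |g y 2 + R| < 1 / 2 := by simpa [south] using hclose 2
  have hneg : g y 2 < 0 := by linarith [(abs_lt.1 h₂).2]
  have hmem : (g y 0, g y 1) ∈ closedBall (0 : ℝ × ℝ) (1 / 2) :=
    mem_closedBall_zero_iff.2 (norm_prod_le_iff.2 ⟨h₀.le, h₁.le⟩)
  change y ∈ ball 0 R ↔ f (g y 0, g y 1) < g y 2
  rw [← hfeq hmem, mem_ball_zero_iff, ← g.norm_map y, EuclideanSpace.norm_eq, Fin.sum_univ_three,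
    Real.sqrt_lt' (by linarith), neg_lt, Real.lt_sqrt (by linarith), neg_sq]
  simp only [Real.norm_eq_abs, sq_abs]
  constructor <;> intro h <;> linarith

lemma sphere_add_ball_subset {E : Type*} [SeminormedAddCommGroup E] (R h : ℝ) :
    sphere (0 : E) R + ball 0 h ⊆ ball 0 (R + h) \ ball 0 (R - h) := by
  rintro _ ⟨x, hx, y, hy, rfl⟩
  rw [mem_sphere_zero_iff_norm] at hx
  rw [mem_ball_zero_iff] at hy
  rw [Set.mem_sdiff, mem_ball_zero_iff, mem_ball_zero_iff, not_lt]
  constructor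
  · linarith [norm_add_le x y]
  · linarith [norm_sub_le (x + y) y, congrArg norm (add_sub_cancel_right x y)]

lemma fisherCond_ball (hR : 0 < R) : FisherCond 43 R (ball (0 : E3) R) := by
  intro h h0 hhR
  have hfin : volume (ball (0 : E3) (R + h)) ≠ ⊤ := measure_ball_lt_top.ne
  rw [frontier_ball (0 : E3) hR.ne']
  calc vol (sphere (0 : E3) R + ball 0 h)
      ≤ vol (ball (0 : E3) (R + h) \ ball 0 (R - h)) :=
        measureReal_mono (sphere_add_ball_subset R h) (measure_ne_top_of_subset sdiff_subset hfin)
    _ = vol (ball (0 : E3) (R + h)) - vol (ball (0 : E3) (R - h)) :=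
        measureReal_sdiff (ball_subset_ball (by linarith)) measurableSet_ball hfin
    _ = (6 * R ^ 2 + 2 * h ^ 2) * h * (Real.pi * 4 / 3) := by
        rw [vol_ball (by linarith), vol_ball (by linarith)]
        ring
    _ ≤ (6 * R ^ 2 + 2 * R ^ 2) * h * (4 * 4 / 3) := by
        gcongr
        exact Real.pi_le_four
    _ = 128 / 3 * (R ^ 2 * h) := by ring
    _ ≤ 43 * (R ^ 2 * h) := by gcongr; norm_num
    _ = 43 * R ^ 2 * h := by ring

lemma isAdmissibleSeq_ball :
    IsAdmissibleSeq (1 / 2) 2 43 (fun n => ball (0 : E3) (n + 1)) (fun n => n + 1) := by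
  refine ⟨tendsto_atTop_add_const_right _ _ tendsto_natCast_atTop_atTop, fun n => ?_⟩
  exact ⟨isOpen_ball, isBounded_ball, isLipschitzDomain_ball (by simp),
    ball_subset_ball (div_le_self (by positivity) (by norm_num)), Subset.rfl,
    fisherCond_ball (by positivity)⟩

lemma hasFinPer_ball (r : ℝ) : HasFinPer (ball (0 : E3) r) := by
  rcases le_or_gt r 0 with hr | hr
  · refine ⟨0, ?_⟩
    rintro _ ⟨φ, -, -, -, rfl⟩
    simp [ball_eq_empty.2 hr]
  · obtain ⟨C, v, hv⟩ := exists_isBVCutoffSeq (convex_ball (0 : E3) r) isOpen_ball isBounded_ball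
      ⟨0, mem_ball_self hr⟩
    exact hv.hasFinPer measurableSet_ball

lemma exists_subset_ball_vol_eq (hR : 0 ≤ R) (hρ0 : 0 ≤ ρ) (hρ1 : ρ ≤ 1) :
    ∃ Ω ⊆ ball (0 : E3) R, MeasurableSet Ω ∧ HasFinPer Ω ∧ vol Ω = ρ * vol (ball (0 : E3) R) := by
  have hroot : (ρ ^ (1 / 3 : ℝ)) ^ 3 = ρ := by
    rw [← Real.rpow_natCast, ← Real.rpow_mul hρ0]
    norm_num
  refine ⟨ball 0 (ρ ^ (1 / 3 : ℝ) * R), ball_subset_ball (mul_le_of_le_one_left hR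
    (Real.rpow_le_one hρ0 hρ1 (by norm_num))), measurableSet_ball, hasFinPer_ball _, ?_⟩
  rw [vol_ball (by positivity), vol_ball hR, mul_pow, hroot, mul_assoc]

end Ball

section ThermodynamicLimit

variable {K : Set E3} {p : E3 → ℝ} {v : ℕ → E3 → ℝ} {C d R ρ : ℝ}

lemma IsCovariogramGauge.le_EE_div_vol (hp : IsCovariogramGauge K p) (hK : MeasurableSet K)
    (hKc : Convex ℝ K) (hKd : K ⊆ ball 0 d) (hd : 0 ≤ d) (hK0 : 0 < vol K)
    (hv : IsBVCutoffSeq K C v) (hρ0 : 0 ≤ ρ) (hρ1 : ρ ≤ 1) (hR : 0 < R) (hdR : d ≤ R) :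
    (FF K ρ * (1 - d / R) ^ 3 + energyFloor d * ((1 + d / R) ^ 3 - (1 - d / R) ^ 3) - C * ρ) /
        vol K + muStar * ρ ≤ EE (ball 0 R) ρ / vol (ball (0 : E3) R) := by
  have hball : 0 < vol (ball (0 : E3) R) := by
    rw [vol_ball hR.le]
    positivity
  obtain ⟨Ω₀, hΩ₀R, hΩ₀, hper₀, hvol₀⟩ := exists_subset_ball_vol_eq hR.le hρ0 hρ1
  rw [le_div_iff₀ hball]
  refine le_csInf ⟨_, Ω₀, hΩ₀, hΩ₀R, hper₀, hvol₀, rfl⟩ ?_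
  rintro _ ⟨Ω, hΩ, hΩR, hper, hvol, rfl⟩
  obtain ⟨Ω', hΩ', hΩR', hper', hvol', henergy, hker⟩ :=
    hp.exists_rotated_set Ω hρ0 hρ1 hΩ hΩR hper
  have hmain := hp.FF_mul_vol_add_le hK hKc hKd hd hK0 hv hρ0 hρ1 hΩ' hΩR' hper' hker
  rw [henergy, hvol', hvol, vol_closedBall (sub_nonneg.2 hdR) hR, vol_closedBall (by positivity) hR,
    sub_div, add_div, div_self hR.ne'] at hmain
  rw [add_mul, div_mul_eq_mul_div, ← le_sub_iff_add_le, div_le_iff₀ hK0]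
  linarith

lemma IsCovariogramGauge.le_of_isThermoLimit (hp : IsCovariogramGauge K p) (hK : MeasurableSet K)
    (hKc : Convex ℝ K) (hKb : IsBounded K) (hK0 : 0 < vol K) (hv : IsBVCutoffSeq K C v)
    (hρ0 : 0 ≤ ρ) (hρ1 : ρ ≤ 1) {e : ℝ → ℝ} (he : IsThermoLimit e) :
    (FF K ρ - C * ρ) / vol K + muStar * ρ ≤ e ρ := by
  obtain ⟨d, hd, hKd⟩ := hKb.subset_ball_lt 0 0
  have hradius : Tendsto (fun n : ℕ => (n : ℝ) + 1) atTop atTop :=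
    tendsto_atTop_add_const_right _ _ tendsto_natCast_atTop_atTop
  have hlower : Tendsto (fun x => (FF K ρ * (1 - x) ^ 3 +
      energyFloor d * ((1 + x) ^ 3 - (1 - x) ^ 3) - C * ρ) / vol K + muStar * ρ) (𝓝 0)
      (𝓝 ((FF K ρ - C * ρ) / vol K + muStar * ρ)) :=
    Continuous.tendsto' (by fun_prop) _ _ (by simp)
  refine le_of_tendsto_of_tendsto (hlower.comp (hradius.const_div_atTop d))
    (he ρ hρ0 hρ1 _ _ _ _ _ (by norm_num) two_pos (by norm_num) isAdmissibleSeq_ball) ?_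
  filter_upwards [hradius.eventually_ge_atTop d] with n hn
  exact hp.le_EE_div_vol hK hKc hKd hd.le hK0 hv hρ0 hρ1 (by positivity) hn

end ThermodynamicLimit

/-- **Reduction to sets of finite size via the Graf–Schenker inequality**: for a tetrahedron `Δ`
of unit volume there is a constant `C` depending only on `Δ` such that
`e(ρ) − μ*ρ ≥ F_{ℓΔ}(ρ)/ℓ³ − Cρ/ℓ` for all `ρ ∈ [0,1]` and `ℓ > 0`. -/
theorem graf_schenker_reduction (Δ : Set E3) (hΔ : IsTetra Δ) (hΔvol : volume Δ = 1)
    (e : ℝ → ℝ) (he : IsThermoLimit e) :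
    ∃ C : ℝ, 0 < C ∧ ∀ ρ : ℝ, 0 ≤ ρ → ρ ≤ 1 → ∀ ℓ : ℝ, 0 < ℓ →
      FF (ℓ • Δ) ρ / ℓ^3 - C * ρ / ℓ ≤ e ρ - muStar * ρ := by
  obtain ⟨C, v, hv⟩ := exists_isBVCutoffSeq hΔ.convex hΔ.isOpen hΔ.isBounded hΔ.nonempty
  refine ⟨max C 1, by positivity, fun ρ hρ0 hρ1 ℓ hℓ => ?_⟩
  have hscaled : IsTetra (ℓ • Δ) := hΔ.smul hℓ.ne'
  have hvol : vol (ℓ • Δ) = ℓ ^ 3 := by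
    simpa [measureReal_def, hΔvol, vol] using measureReal_vadd_smul hℓ.le 0 Δ
  have hcutoff := hv.vadd_smul hℓ 0
  rw [zero_vadd, finrank_euclideanSpace_fin] at hcutoff
  obtain ⟨p, hp⟩ := hscaled.exists_isCovariogramGauge
  have hlimit := hp.le_of_isThermoLimit hscaled.isOpen.measurableSet hscaled.convex
    hscaled.isBounded (hvol ▸ by positivity) hcutoff hρ0 hρ1 he
  have hC : C * ρ / ℓ ≤ max C 1 * ρ / ℓ := by gcongr; exact le_max_left _ _
  have hsplit : (FF (ℓ • Δ) ρ - ℓ ^ 3 / ℓ * C * ρ) / ℓ ^ 3 = FF (ℓ • Δ) ρ / ℓ ^ 3 - C * ρ / ℓ := by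
    field_simp
  rw [hvol, hsplit] at hlimit
  linarith

end
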